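/- arXiv:2405.05592 — 2 statements merged into one kernel-verified Lean document; each statement's English description precedes it below -/
import Mathlib

section
/- Assume n ≥ 4 and gcd(L, 2·det(2M_F)) = 1, and let Γ ∈ ℤ^{n+1} satisfy F(Γ) ≡ 0 mod L and gcd(Γ₀,…,Γ_n, L) = 1. Then all limits and products below exist, the double sum converges absolutely, and Σ_{γ ∈ (ℤ/Lℤ)^×} Σ_{d ≥ 1, gcd(d,L)=1} μ(d)·d^{−(n−1)}·𝔖(W; L, γ·d̄·Γ) = ∏_{p ∣ L} (1 − p^{−1})·p^{−(n−1)m_p} · ∏_{p ∤ L} (1 − p^{−(n−1)})·σ_p(W), where μ is the Möbius function, d̄ is the inverse of d modulo L, m_p := ord_p(L), and σ_p(W) := lim_{k→∞} p^{−nk}·#{ v ∈ (ℤ/p^kℤ)^{n+1} : F(v) ≡ 0 mod p^k }. -/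
open scoped BigOperators
open Finset Filter Topology Matrix

noncomputable section

namespace Quad

/-- The integral quadratic form `x ↦ xᵀ M_F x` where `N = 2·M_F` is an integer
symmetric matrix with even diagonal, so that the value `(xᵀ N x)/2` is an integer. -/
def Fint {m : ℕ} (N : Matrix (Fin m) (Fin m) ℤ) (x : Fin m → ℤ) : ℤ :=
  (∑ i, ∑ j, N i j * x i * x j) / 2

/-- The corresponding real quadratic form `x ↦ xᵀ M_F x`, `N = 2·M_F`. -/
def FR {m : ℕ} (N : Matrix (Fin m) (Fin m) ℤ) (x : Fin m → ℝ) : ℝ :=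
  (∑ i, ∑ j, (N i j : ℝ) * x i * x j) / 2

/-- The real quadratic form attached to a real matrix. -/
def QFR {m : ℕ} (A : Matrix (Fin m) (Fin m) ℝ) (x : Fin m → ℝ) : ℝ :=
  ∑ i, ∑ j, A i j * x i * x j

/-- The gradient `∇F(x) = 2 M_F x = N x`. -/
def grad {m : ℕ} (N : Matrix (Fin m) (Fin m) ℤ) (x : Fin m → ℤ) : Fin m → ℤ :=
  fun i => ∑ j, N i j * x j

/-- `H_{λ,L}(y) = F(λ)/L + ∇F(λ)·y` (assuming `L ∣ F(λ)`). -/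
def Hpoly {m : ℕ} (N : Matrix (Fin m) (Fin m) ℤ) (L : ℕ) (lam y : Fin m → ℤ) : ℤ :=
  Fint N lam / (L : ℤ) + ∑ i, grad N lam i * y i

/-- The additive character `e_q(t) = exp(2πit/q)`. -/
def eChar (q : ℕ) (t : ℝ) : ℂ := Complex.exp (2 * Real.pi * Complex.I * (t : ℂ) / (q : ℂ))

/-- The dual form value `N_F(c) = cᵀ · adj(N) · c`, `N = 2 M_F`; this equals `2ⁿ F*(c)`. -/
def dualF {m : ℕ} (N : Matrix (Fin m) (Fin m) ℤ) (c : Fin m → ℤ) : ℤ :=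
  ∑ i, ∑ j, N.adjugate i j * c i * c j

/-- The embedding sending the `i`-th of the `n-1` variables of `F₂` to coordinate `i+2`. -/
def emb {n : ℕ} (i : Fin (n-1)) : Fin (n+1) := ⟨i.val + 2, by have h := i.isLt; omega⟩

/-- The quadratic Gauss sum `ι_q = Σ_{x mod q} e_q(x²)`. -/
def iotaSum (q : ℕ) : ℂ := ∑ x ∈ Finset.range q, eChar q ((x : ℝ)^2)

open Classical in
/-- The exponential sum `S_{q,L,λ}(c)`. -/
def Sq (n : ℕ) (N : Matrix (Fin (n+1)) (Fin (n+1)) ℤ) (q L : ℕ)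
    (lam c : Fin (n+1) → ℤ) : ℂ :=
  ∑ a ∈ (Finset.range q).filter (fun a => Nat.gcd a q = 1),
    ∑ σ ∈ (Finset.univ : Finset (Fin (n+1) → Fin (q*L))).filter
        (fun σ => (L : ℤ) ∣ Hpoly N L lam (fun i => ((σ i : ℕ) : ℤ))),
      eChar (q*L)
        (((a : ℤ) * (Hpoly N L lam (fun i => ((σ i : ℕ) : ℤ))
            + (L : ℤ) * Fint N (fun i => ((σ i : ℕ) : ℤ)))
          + ∑ i, c i * ((σ i : ℕ) : ℤ) : ℤ) : ℝ)

/-- The good-modulus factor `S⁽¹⁾_{q,L,λ}(c)` (for `q = q₁q₂`, `gcd(q₁,2LD) = 1`). -/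
def S1 (n : ℕ) (N : Matrix (Fin (n+1)) (Fin (n+1)) ℤ) (q₁ q₂ L : ℕ) (k₁ : ℤ)
    (lam c : Fin (n+1) → ℤ) : ℂ :=
  ∑ σ : Fin (n+1) → Fin q₁,
    ∑ a ∈ (Finset.range q₁).filter (fun a => Nat.gcd a q₁ = 1),
      eChar q₁
        (((a : ℤ) * (((q₂ : ℤ) * (L : ℤ))^2 * Fint N (fun i => ((σ i : ℕ) : ℤ))
              + (q₂ : ℤ) * ((∑ i, grad N lam i * ((σ i : ℕ) : ℤ)) + k₁))
          + ∑ i, c i * ((σ i : ℕ) : ℤ) : ℤ) : ℝ)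

open Classical in
/-- The bad-modulus factor `S⁽²⁾_{q,L,λ}(c)`. -/
def S2 (n : ℕ) (N : Matrix (Fin (n+1)) (Fin (n+1)) ℤ) (q₁ q₂ L : ℕ) (k₂ : ℤ)
    (lam c : Fin (n+1) → ℤ) : ℂ :=
  ∑ σ ∈ (Finset.univ : Finset (Fin (n+1) → Fin (q₂*L))).filter
      (fun σ => (L : ℤ) ∣ Hpoly N L lam (fun i => (q₁ : ℤ) * ((σ i : ℕ) : ℤ))),
    ∑ a ∈ (Finset.range q₂).filter (fun a => Nat.gcd a q₂ = 1),
      eChar (q₂*L)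
        (((a : ℤ) * ((q₁ : ℤ)^2 * (L : ℤ) * Fint N (fun i => ((σ i : ℕ) : ℤ))
              + (q₁ : ℤ) * ((∑ i, grad N lam i * ((σ i : ℕ) : ℤ)) + k₂))
          + ∑ i, c i * ((σ i : ℕ) : ℤ) : ℤ) : ℝ)

/-- The complete quadratic exponential sum `T_q(G,m;c)`. -/
def Tq (n : ℕ) (NG : Matrix (Fin (n+1)) (Fin (n+1)) ℤ) (q : ℕ) (m : ℤ)
    (c : Fin (n+1) → ℤ) : ℂ :=
  ∑ a ∈ (Finset.range q).filter (fun a => Nat.gcd a q = 1),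
    ∑ b : Fin (n+1) → Fin q,
      eChar q (((a : ℤ) * (Fint NG (fun i => ((b i : ℕ) : ℤ)) - m)
        + ∑ i, c i * ((b i : ℕ) : ℤ) : ℤ) : ℝ)

/-- The counting function whose normalised limit is the local density
`σ_p(W;L,λ)`: the number of `v ∈ (ℤ/p^kℤ)^{n+1}` with `F(v) ≡ 0 mod p^k` and
`v ≡ λ mod p^{ord_p L}`. -/
def localCount (n : ℕ) (N : Matrix (Fin (n+1)) (Fin (n+1)) ℤ) (L : ℕ)
    (lam : Fin (n+1) → ℤ) (p k : ℕ) : ℕ :=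
  Nat.card {v : Fin (n+1) → Fin (p^k) //
    ((p : ℤ)^k ∣ Fint N (fun i => ((v i : ℕ) : ℤ))) ∧
    ∀ i, (p : ℤ)^(padicValNat p L) ∣ ((v i : ℕ) : ℤ) - lam i}

/-- The coordinates `t(x) = Mx` of an integer vector. -/
def tmap (n : ℕ) (M : Matrix (Fin (n+1)) (Fin (n+1)) ℝ) (x : Fin (n+1) → ℤ) :
    Fin (n+1) → ℝ :=
  M.mulVec (fun i => (x i : ℝ))

/-- The counting function `N_W((R,ξ),(L,Γ);B)` for the affine cone. -/
def NW (n : ℕ) (N : Matrix (Fin (n+1)) (Fin (n+1)) ℤ)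
    (M : Matrix (Fin (n+1)) (Fin (n+1)) ℝ) (a b : Fin (n+1) → ℝ)
    (B R : ℝ) (L : ℕ) (Γ : Fin (n+1) → ℤ) : ℕ :=
  Nat.card {x : Fin (n+1) → ℤ //
    x ≠ 0 ∧ Fint N x = 0 ∧ (∀ i, (L : ℤ) ∣ x i - Γ i) ∧
    tmap n M x 0 ≠ 0 ∧
    (∀ j : Fin (n+1), 2 ≤ j.val →
      a j ≤ R * (tmap n M x j / tmap n M x 0) ∧ R * (tmap n M x j / tmap n M x 0) ≤ b j) ∧
    (∀ i, |tmap n M x i| ≤ B)}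

/-- Twice the counting function `N_V((R,ξ),(L,Λ);B)` for the projective quadric:
the number of primitive integer vectors on the cone, in the real zoom region,
of height at most `B`, congruent mod `L` to a unit multiple of `Γ`. -/
def NV (n : ℕ) (N : Matrix (Fin (n+1)) (Fin (n+1)) ℤ)
    (M : Matrix (Fin (n+1)) (Fin (n+1)) ℝ) (a b : Fin (n+1) → ℝ)
    (B R : ℝ) (L : ℕ) (Γ : Fin (n+1) → ℤ) : ℕ :=
  Nat.card {x : Fin (n+1) → ℤ //
    Finset.univ.gcd x = 1 ∧ Fint N x = 0 ∧
    tmap n M x 0 ≠ 0 ∧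
    (∀ j : Fin (n+1), 2 ≤ j.val →
      a j ≤ R * (tmap n M x j / tmap n M x 0) ∧ R * (tmap n M x j / tmap n M x 0) ≤ b j) ∧
    (∀ i, |tmap n M x i| ≤ B) ∧
    (∃ γ : (ZMod L)ˣ, ∀ i, ((x i : ZMod L)) = (γ : ZMod L) * ((Γ i : ZMod L)))}

/-- The value of the singular integral `I_R` for `R ≥ R₀`. -/
def IRval (n : ℕ) (M : Matrix (Fin (n+1)) (Fin (n+1)) ℝ) (a b : Fin (n+1) → ℝ)
    (R : ℝ) : ℝ :=
  2 * (∏ j ∈ Finset.univ.filter (fun j : Fin (n+1) => 2 ≤ j.val), (b j - a j))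
    / (((n : ℝ) - 1) * |M.det| * R^(n-1))

/-- The error exponent factor `E_τ(B)`. -/
def Etau (n : ℕ) (τ B : ℝ) : ℝ :=
  if 5 ≤ n then B ^ (-(((n : ℝ) - 3) * τ / (5 * (n : ℝ) - 7)))
  else B ^ (-(2 * τ / 17))

/-- The error factor `E_τ(1;B)` from the upper-bound range `-1 < τ < 1`. -/
def Etau1 (n : ℕ) (τ B : ℝ) : ℝ :=
  if 5 ≤ n then B ^ (-(((n : ℝ) - 3) * τ / 2))
  else B ^ (-τ) + B ^ (-((1 + τ)/4))

end Quad

namespace Quad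

/-!
Weyl differencing bounds `∑ ψ(Q v)` for a primitive character `ψ` in terms of the kernel of the
polar form, whose size modulo `p ^ k` is at most `|det| ^ (n + 1)`. Expanding the indicator of
`F = 0` in characters of `ZMod (p ^ (k + 1))`, the characters of level `p ^ k` reproduce the density
at level `k` and the others are bounded by Weyl. So consecutive densities differ geometrically, the
limit `σ_p(W)` exists, and it is `1 + O(p ^ (-(n - 1) / 2))`; since `n ≥ 4`, the product of these
over `p ∤ L` converges absolutely.

At `p ∣ L` the vector `γ d̄ Γ` is a smooth zero modulo `p ^ m_p`, and Hensel's lemma gives it the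
density `p ^ (-n m_p)`, whatever `γ` and `d` are. The singular series is therefore constant and
factors out of the double sum. What remains is `φ(L) ∑ μ(d) d ^ (-(n - 1))` over `d` coprime to `L`,
which supplies the Euler factors `1 - p ^ (-(n - 1))` at `p ∤ L` and `1 - p⁻¹` at `p ∣ L`.
-/

section ExponentialSums

variable {R M : Type*} [CommRing R] [AddCommGroup M] [Module R M] {ψ : AddChar R ℂ}

open Classical in
lemma sum_addChar_linearMap [Fintype M] (hψ : ψ.IsPrimitive) (l : M →ₗ[R] R) :
    ∑ x, ψ (l x) = if l = 0 then (Nat.card M : ℂ) else 0 := by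
  have h := AddChar.sum_eq_ite (ψ.compAddMonoidHom l.toAddMonoidHom)
  rw [← Nat.card_eq_fintype_card] at h
  refine h.trans (if_congr ⟨fun hl => ?_, fun hl => ?_⟩ rfl rfl)
  · ext x
    by_contra hx
    refine hψ hx (DFunLike.ext _ _ fun r => ?_)
    simpa [AddChar.mulShift_apply, mul_comm] using DFunLike.congr_fun hl (r • x)
  · ext x
    simp [hl]

open Classical in
lemma sum_quadraticMap_mul_conj [Finite R] [Fintype M] (hψ : ψ.IsPrimitive)
    (Q : QuadraticMap R M R) :
    (∑ v, ψ (Q v)) * (starRingEnd ℂ) (∑ v, ψ (Q v)) =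
      ∑ h, if Q.polarBilin h = 0 then ψ (Q h) * Nat.card M else 0 := by
  calc (∑ v, ψ (Q v)) * (starRingEnd ℂ) (∑ v, ψ (Q v))
      = ∑ w, ∑ v, ψ (Q v) * ψ (-Q w) := by
        simp_rw [map_sum, ← AddChar.map_neg_eq_conj]
        rw [Finset.sum_mul_sum, Finset.sum_comm]
    _ = ∑ w, ∑ h, ψ (Q h) * ψ (Q.polarBilin h w) := by
        refine Finset.sum_congr rfl fun w _ => ?_
        rw [← Equiv.sum_comp (Equiv.addRight w)]
        refine Finset.sum_congr rfl fun h _ => ?_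
        rw [← AddChar.map_add_eq_mul, ← AddChar.map_add_eq_mul, Equiv.coe_addRight,
          QuadraticMap.polarBilin_apply_apply, QuadraticMap.map_add Q h w]
        congr 1
        ring
    _ = ∑ h, if Q.polarBilin h = 0 then ψ (Q h) * Nat.card M else 0 := by
        rw [Finset.sum_comm]
        simp_rw [← Finset.mul_sum, sum_addChar_linearMap hψ, mul_ite, mul_zero]

lemma norm_sum_quadraticMap_sq_le [Finite R] [Fintype M] (hψ : ψ.IsPrimitive)
    (Q : QuadraticMap R M R) :
    ‖∑ v, ψ (Q v)‖ ^ 2 ≤ (Nat.card M : ℝ) * Nat.card Q.polarBilin.ker := by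
  classical
  have hsq : ‖∑ v, ψ (Q v)‖ ^ 2 =
      ‖∑ h, if Q.polarBilin h = 0 then ψ (Q h) * Nat.card M else 0‖ := by
    rw [← sum_quadraticMap_mul_conj hψ, norm_mul, RCLike.norm_conj, sq]
  have hker : (Nat.card Q.polarBilin.ker : ℝ) = ∑ h, if Q.polarBilin h = 0 then 1 else 0 := by
    rw [Finset.sum_boole, ← Fintype.card_subtype, ← Nat.card_eq_fintype_card]
    rfl
  rw [hsq, hker, Finset.mul_sum]
  refine norm_sum_le_of_le _ fun h _ => ?_
  split_ifs <;> simp [AddChar.norm_apply]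

lemma sum_ideal_sum_addChar {α : Type*} [Fintype α] (hψ : ψ.IsPrimitive) (J : Ideal R)
    [Fintype J] (f : α → R) :
    ∑ b : J, ∑ v, ψ (b * f v) = Nat.card J * Nat.card {v // ∀ b ∈ J, b * f v = 0} := by
  classical
  have hzero (v : α) :
      (LinearMap.mulRight R (f v)) ∘ₗ J.subtype = 0 ↔ ∀ b ∈ J, b * f v = 0 := by
    simp [LinearMap.ext_iff]
  have hinner (v : α) :
      ∑ b : J, ψ (b * f v) = if ∀ b ∈ J, b * f v = 0 then (Nat.card J : ℂ) else 0 := by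
    simpa only [hzero, LinearMap.comp_apply, LinearMap.mulRight_apply, Submodule.subtype_apply]
      using sum_addChar_linearMap hψ ((LinearMap.mulRight R (f v)) ∘ₗ J.subtype)
  rw [Finset.sum_comm, Finset.sum_congr rfl fun v _ => hinner v, ← Finset.sum_filter,
    Finset.sum_const, nsmul_eq_mul, ← Fintype.card_subtype, ← Nat.card_eq_fintype_card, mul_comm]

lemma ker_polarBilin_smul_of_isUnit {u : R} (hu : IsUnit u) (Q : QuadraticMap R M R) :
    (u • Q).polarBilin.ker = Q.polarBilin.ker := by
  ext h
  simp [LinearMap.mem_ker, LinearMap.ext_iff, QuadraticMap.polar_smul, hu.mul_right_eq_zero]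

lemma card_mul_card_zeros_sub_eq {α : Type*} [Fintype α] [Fintype R] (hψ : ψ.IsPrimitive)
    (J : Ideal R) [DecidablePred (· ∈ J)] (f : α → R) :
    (Nat.card R : ℂ) * Nat.card {v // f v = 0} - Nat.card J * Nat.card {v // ∀ b ∈ J, b * f v = 0} =
      ∑ b : {b // b ∉ J}, ∑ v, ψ (b * f v) := by
  classical
  have hall : ∑ b, ∑ v, ψ (b * f v) = (Nat.card R : ℂ) * Nat.card {v // f v = 0} := by
    have hzero (v : α) : (∀ b ∈ (⊤ : Ideal R), b * f v = 0) ↔ f v = 0 :=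
      ⟨fun h => by simpa using h 1 trivial, fun h b _ => by rw [h, mul_zero]⟩
    have h := sum_ideal_sum_addChar hψ ⊤ f
    simp_rw [hzero, Nat.card_congr (Submodule.topEquiv (R := R) (M := R)).toEquiv] at h
    rw [← h]
    exact (Equiv.sum_comp (Submodule.topEquiv (R := R) (M := R)).toEquiv _).symm
  rw [← hall, ← sum_ideal_sum_addChar hψ J f, sub_eq_iff_eq_add']
  exact (Fintype.sum_subtype_add_sum_subtype (· ∈ J) fun b => ∑ v, ψ (b * f v)).symm

lemma abs_card_mul_card_zeros_sub_le [Finite R] [Finite M] (hψ : ψ.IsPrimitive)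
    {J : Ideal R} (hJ : ∀ b ∉ J, IsUnit b) (Q : QuadraticMap R M R) :
    |(Nat.card R : ℝ) * Nat.card {v // Q v = 0} -
        Nat.card J * Nat.card {v // ∀ b ∈ J, b * Q v = 0}| ≤
      Nat.card R * √(Nat.card M * Nat.card Q.polarBilin.ker) := by
  classical
  have := Fintype.ofFinite R
  have := Fintype.ofFinite M
  have hbound (b : {b // b ∉ J}) :
      ‖∑ v, ψ (b * Q v)‖ ≤ √(Nat.card M * Nat.card Q.polarBilin.ker) := by
    rw [← ker_polarBilin_smul_of_isUnit (hJ b b.2)]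
    exact Real.le_sqrt_of_sq_le (norm_sum_quadraticMap_sq_le hψ ((b : R) • Q))
  have hcard : Fintype.card {b // b ∉ J} ≤ Nat.card R := by
    rw [Nat.card_eq_fintype_card]
    exact Fintype.card_subtype_le _
  rw [← Real.norm_eq_abs, ← Complex.norm_real]
  push_cast
  rw [card_mul_card_zeros_sub_eq hψ]
  calc ‖∑ b : {b // b ∉ J}, ∑ v, ψ (b * Q v)‖
      ≤ Fintype.card {b // b ∉ J} • √(Nat.card M * Nat.card Q.polarBilin.ker) :=
        (norm_sum_le_of_le _ fun b _ => hbound b).trans_eq (by simp)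
    _ ≤ Nat.card R * √(Nat.card M * Nat.card Q.polarBilin.ker) := by
        rw [nsmul_eq_mul]
        gcongr

end ExponentialSums

section Reduction

lemma card_subtype_comp_mul_card {G H : Type*} [AddGroup G] [AddGroup H] (f : G →+ H)
    (hf : Function.Surjective f) (P : H → Prop) :
    Nat.card {g // P (f g)} * Nat.card H = Nat.card {h // P h} * Nat.card G := by
  obtain ⟨s, hs⟩ := hf.hasRightInverse
  let fibration (P : H → Prop) : {g // P (f g)} ≃ f.ker × {h // P h} :=
    { toFun := fun g => (⟨g - s (f g), by simp [AddMonoidHom.mem_ker, hs (f g)]⟩, ⟨f g, g.2⟩)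
      invFun := fun x => ⟨x.1 + s x.2, by
        rw [map_add, AddMonoidHom.mem_ker.1 x.1.2, zero_add, hs]
        exact x.2.2⟩
      left_inv := fun g => by simp
      right_inv := fun x => by
        have hx : f (x.1 + s x.2) = x.2 := by
          rw [map_add, AddMonoidHom.mem_ker.1 x.1.2, zero_add, hs]
        ext <;> simp [hx] }
  have hG : Nat.card G = Nat.card f.ker * Nat.card H := by
    have h := Nat.card_congr (fibration fun _ => True)
    rwa [Nat.card_prod, Nat.card_congr (Equiv.subtypeUnivEquiv fun _ => trivial),
      Nat.card_congr (Equiv.subtypeUnivEquiv fun _ => trivial)] at h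
  rw [Nat.card_congr (fibration P), Nat.card_prod, hG]
  ring

variable {d e q : ℕ} [NeZero q]

lemma castHom_eq_zero_iff_dvd_val (hd : d ∣ q) (x : ZMod q) :
    ZMod.castHom hd (ZMod d) x = 0 ↔ d ∣ x.val := by
  rw [ZMod.castHom_apply, ZMod.cast_eq_val, ZMod.natCast_eq_zero_iff]

lemma card_ker_castHom_mul (hd : d ∣ q) :
    Nat.card (RingHom.ker (ZMod.castHom hd (ZMod d))) * d = q := by
  simpa using card_subtype_comp_mul_card (ZMod.castHom hd (ZMod d) : ZMod q →+ ZMod d)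
    (ZMod.ringHom_surjective _) (· = 0)

lemma forall_mem_ker_castHom_mul_eq_zero_iff (hd : d ∣ q) (he : e ∣ q) (hde : d * e = q)
    (t : ZMod q) :
    (∀ b ∈ RingHom.ker (ZMod.castHom hd (ZMod d)), b * t = 0) ↔
      ZMod.castHom he (ZMod e) t = 0 := by
  have hd0 : d ≠ 0 := fun h => NeZero.ne q (Nat.eq_zero_of_zero_dvd (h ▸ hd))
  have hdt : (d : ZMod q) * t = 0 ↔ ZMod.castHom he (ZMod e) t = 0 := by
    rw [castHom_eq_zero_iff_dvd_val, ← Nat.mul_dvd_mul_iff_left (Nat.pos_of_ne_zero hd0), hde,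
      ← ZMod.natCast_eq_zero_iff, Nat.cast_mul, ZMod.natCast_zmod_val]
  rw [← hdt]
  refine ⟨fun h => h d (by simp [RingHom.mem_ker]), fun h b hb => ?_⟩
  obtain ⟨c, hc⟩ := (castHom_eq_zero_iff_dvd_val hd b).1 hb
  rw [← ZMod.natCast_zmod_val b, hc, Nat.cast_mul, mul_right_comm, h, zero_mul]

lemma isUnit_of_castHom_prime_ne_zero {p k : ℕ} (hp : p.Prime) (hk : k ≠ 0) {x : ZMod (p ^ k)}
    (hx : ZMod.castHom (dvd_pow_self p hk) (ZMod p) x ≠ 0) : IsUnit x := by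
  have : NeZero (p ^ k) := ⟨pow_ne_zero k hp.ne_zero⟩
  rw [Ne, castHom_eq_zero_iff_dvd_val, ← hp.coprime_iff_not_dvd, Nat.coprime_comm] at hx
  rw [← ZMod.natCast_zmod_val x]
  exact (ZMod.isUnit_iff_coprime _ _).2 (hx.pow_right k)

end Reduction

section IntegralForms

variable {ι : Type*} [Fintype ι] [DecidableEq ι]

/-- The quadratic form `x ↦ xᵀ A x` over a commutative ring `R`, for an integer matrix `A`. The
matrix `A` need not be symmetric: an integral form with Hessian `A + Aᵀ` can then be reduced modulo
every integer, powers of two included. -/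
def formOver (A : Matrix ι ι ℤ) (R : Type*) [CommRing R] : QuadraticForm R (ι → R) :=
  (A.map (Int.cast : ℤ → R)).toQuadraticForm'

/-- The number of zeros of the form `x ↦ xᵀ A x` over `R`, for a finite ring `R` (it is `0` if there
are infinitely many). -/
def zeroCount (A : Matrix ι ι ℤ) (R : Type*) [CommRing R] : ℕ :=
  Nat.card {v : ι → R // formOver A R v = 0}

variable (A : Matrix ι ι ℤ) {R S : Type*} [CommRing R] [CommRing S]

lemma formOver_apply (x : ι → R) :
    formOver A R x = x ⬝ᵥ (A.map (Int.cast : ℤ → R)) *ᵥ x :=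
  Matrix.toLinearMap₂'_apply' _ x x

lemma formOver_comp (f : R →+* S) (x : ι → R) : formOver A S (f ∘ x) = f (formOver A R x) := by
  simp [formOver_apply, dotProduct, mulVec]

lemma polar_formOver (x y : ι → R) :
    QuadraticMap.polar (formOver A R) x y =
      x ⬝ᵥ ((A + Aᵀ).map (Int.cast : ℤ → R)) *ᵥ y := by
  have hT : ((A + Aᵀ).map (Int.cast : ℤ → R)) = A.map Int.cast + (A.map Int.cast)ᵀ := by
    ext; simp
  rw [QuadraticMap.polar, formOver_apply, formOver_apply, formOver_apply, hT, add_mulVec,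
    mulVec_transpose, dotProduct_add, dotProduct_comm x (y ᵥ* _), ← dotProduct_mulVec, mulVec_add,
    add_dotProduct, dotProduct_add, dotProduct_add]
  ring

lemma card_ker_polarBilin_formOver_le {q : ℕ} [NeZero q] (hA : (A + Aᵀ).det ≠ 0) :
    Nat.card (formOver A (ZMod q)).polarBilin.ker ≤
      (A + Aᵀ).det.natAbs ^ Fintype.card ι := by
  classical
  set D := (A + Aᵀ).det
  set B := (A + Aᵀ).map (Int.cast : ℤ → ZMod q)
  have htorsion (x : (formOver A (ZMod q)).polarBilin.ker) (i : ι) : D.natAbs • x.1 i = 0 := by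
    have hB : x.1 ᵥ* B = 0 := by
      refine dotProduct_eq_zero _ fun y => ?_
      rw [← dotProduct_mulVec, ← polar_formOver]
      exact DFunLike.congr_fun (LinearMap.mem_ker.1 x.2) y
    have hdet : (D : ZMod q) • x.1 = 0 := by
      have hBD : B.det = D := (Int.cast_det _).symm
      rw [← hBD, ← vecMul_one (B.det • x.1), smul_vecMul, ← vecMul_smul, ← mul_adjugate,
        ← vecMul_vecMul, hB, zero_vecMul]
    rw [natAbs_nsmul_eq_zero, zsmul_eq_mul]
    exact congrFun hdet i
  let coords (x : (formOver A (ZMod q)).polarBilin.ker) (i : ι) :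
      {t : ZMod q // D.natAbs • t = 0} := ⟨x.1 i, htorsion x i⟩
  have hinj : Function.Injective coords := fun x y h =>
    Subtype.ext (funext fun i => congrArg Subtype.val (congrFun h i))
  calc Nat.card (formOver A (ZMod q)).polarBilin.ker
      ≤ Nat.card (ι → {t : ZMod q // D.natAbs • t = 0}) := Nat.card_le_card_of_injective _ hinj
    _ = Nat.card {t : ZMod q // D.natAbs • t = 0} ^ Fintype.card ι := by simp
    _ ≤ D.natAbs ^ Fintype.card ι := by
        gcongr
        rw [Nat.card_eq_fintype_card, Fintype.card_subtype]
        exact IsAddCyclic.card_nsmul_eq_zero_le (Int.natAbs_pos.2 hA)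

lemma zeroCount_of_subsingleton [Subsingleton R] : zeroCount A R = 1 := by
  have : Unique {v : ι → R // formOver A R v = 0} :=
    ⟨⟨⟨0, Subsingleton.elim _ _⟩⟩, fun _ => Subsingleton.elim _ _⟩
  exact Nat.card_unique

lemma card_map_formOver_eq_zero_mul (f : R →+* S) (hf : Function.Surjective f) :
    Nat.card {v : ι → R // f (formOver A R v) = 0} * Nat.card S ^ Fintype.card ι =
      zeroCount A S * Nat.card R ^ Fintype.card ι := by
  have h := card_subtype_comp_mul_card (f.toAddMonoidHom.compLeft ι) hf.comp_left
    fun v => formOver A S v = 0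
  have hcomp (v : ι → R) : formOver A S (f.toAddMonoidHom.compLeft ι v) = f (formOver A R v) :=
    formOver_comp A f v
  simp_rw [hcomp] at h
  simpa [zeroCount, Nat.card_fun] using h

lemma abs_zeroCount_pow_succ_sub_le (hA : (A + Aᵀ).det ≠ 0) {p : ℕ} (hp : p.Prime) (k : ℕ) :
    |(p : ℝ) ^ (k + 1) * zeroCount A (ZMod (p ^ (k + 1))) -
        p ^ k * (p ^ Fintype.card ι * zeroCount A (ZMod (p ^ k)))| ≤
      p ^ (k + 1) * √((p ^ (k + 1)) ^ Fintype.card ι *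
        ((A + Aᵀ).det.natAbs ^ Fintype.card ι : ℕ)) := by
  have : NeZero (p ^ (k + 1)) := ⟨pow_ne_zero _ hp.ne_zero⟩
  have hdvd : p ∣ p ^ (k + 1) := dvd_pow_self p k.succ_ne_zero
  have hdvd' : p ^ k ∣ p ^ (k + 1) := pow_dvd_pow p k.le_succ
  set J := RingHom.ker (ZMod.castHom hdvd (ZMod p))
  have hJ : ∀ b ∉ J, IsUnit b := fun b hb => isUnit_of_castHom_prime_ne_zero hp k.succ_ne_zero hb
  have hJcard : Nat.card J = p ^ k :=
    Nat.eq_of_mul_eq_mul_right hp.pos ((card_ker_castHom_mul hdvd).trans (pow_succ p k))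
  have hlift : Nat.card {v : ι → ZMod (p ^ (k + 1)) // ∀ b ∈ J, b * formOver A _ v = 0} =
      p ^ Fintype.card ι * zeroCount A (ZMod (p ^ k)) := by
    simp_rw [J, forall_mem_ker_castHom_mul_eq_zero_iff hdvd hdvd' (pow_succ' p k).symm]
    refine Nat.eq_of_mul_eq_mul_right (pow_pos (pow_pos hp.pos k) (Fintype.card ι)) ?_
    have h := card_map_formOver_eq_zero_mul A (ZMod.castHom hdvd' (ZMod (p ^ k)))
      (ZMod.ringHom_surjective _)
    rw [Nat.card_zmod, Nat.card_zmod] at h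
    rw [h, pow_succ, mul_pow]
    ring
  have h := abs_card_mul_card_zeros_sub_le (ZMod.isPrimitive_stdAddChar _) hJ
    (formOver A (ZMod (p ^ (k + 1))))
  rw [hlift, hJcard] at h
  simp only [Nat.card_zmod, Nat.card_fun, Nat.card_eq_fintype_card (α := ι)] at h
  push_cast at h
  refine h.trans ?_
  gcongr
  exact card_ker_polarBilin_formOver_le A hA

lemma dist_density_succ_le (hA : (A + Aᵀ).det ≠ 0) {n : ℕ} (hn : 1 ≤ n)
    (hι : Fintype.card ι = n + 1) {p : ℕ} (hp : p.Prime) (k : ℕ) :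
    dist ((zeroCount A (ZMod (p ^ k)) : ℝ) / (p : ℝ) ^ (n * k))
        ((zeroCount A (ZMod (p ^ (k + 1))) : ℝ) / (p : ℝ) ^ (n * (k + 1))) ≤
      √((A + Aᵀ).det.natAbs ^ (n + 1) : ℕ) * (√p ^ (n - 1))⁻¹ * (√p ^ (n - 1))⁻¹ ^ k := by
  obtain ⟨m, rfl⟩ := Nat.exists_eq_add_of_le' hn
  have hp0 : (0 : ℝ) < p := by exact_mod_cast hp.pos
  have hs : 0 < √(p : ℝ) := Real.sqrt_pos.2 hp0
  have hsq : (p : ℝ) = √p ^ 2 := (Real.sq_sqrt hp0.le).symm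
  have h := abs_zeroCount_pow_succ_sub_le A hA hp k
  rw [hι, Real.sqrt_mul (by positivity)] at h
  have hdiff : (zeroCount A (ZMod (p ^ (k + 1))) : ℝ) / (p : ℝ) ^ ((m + 1) * (k + 1)) -
      (zeroCount A (ZMod (p ^ k)) : ℝ) / (p : ℝ) ^ ((m + 1) * k) =
        ((p : ℝ) ^ (k + 1) * zeroCount A (ZMod (p ^ (k + 1))) -
          p ^ k * (p ^ (m + 1 + 1) * zeroCount A (ZMod (p ^ k)))) /
            (p : ℝ) ^ ((m + 2) * (k + 1)) := by
    field_simp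
    ring
  rw [dist_comm, Real.dist_eq, hdiff, abs_div, abs_of_pos (pow_pos hp0 _),
    div_le_iff₀ (by positivity)]
  refine h.trans_eq ?_
  generalize √((A + Aᵀ).det.natAbs ^ (m + 1 + 1) : ℕ) = C
  generalize √(p : ℝ) = s at hs hsq
  have hsqrt : √(((p : ℝ) ^ (k + 1)) ^ (m + 1 + 1)) = s ^ ((k + 1) * (m + 2)) := by
    rw [Real.sqrt_eq_iff_eq_sq (by positivity) (by positivity), hsq]
    ring
  rw [hsqrt, hsq, Nat.add_sub_cancel, inv_pow, ← pow_mul]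
  field_simp
  ring

lemma exists_tendsto_density (hA : (A + Aᵀ).det ≠ 0) {n : ℕ} (hn : 2 ≤ n)
    (hι : Fintype.card ι = n + 1) {p : ℕ} (hp : p.Prime) :
    ∃ σ : ℝ, Tendsto (fun k => (zeroCount A (ZMod (p ^ k)) : ℝ) / (p : ℝ) ^ (n * k)) atTop (𝓝 σ) ∧
      |σ - 1| ≤ 4 * √((A + Aᵀ).det.natAbs ^ (n + 1) : ℕ) * (√p ^ (n - 1))⁻¹ := by
  set ρ : ℝ := (√p ^ (n - 1))⁻¹
  have hstep := dist_density_succ_le A hA (by lia) hι hp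
  have hρ : ρ ≤ 3 / 4 := by
    have hsqrt : 4 / 3 ≤ √(p : ℝ) := by
      refine Real.le_sqrt_of_sq_le ?_
      have : (2 : ℝ) ≤ p := by exact_mod_cast hp.two_le
      linarith
    calc ρ ≤ (√(p : ℝ))⁻¹ := by
          refine inv_anti₀ (by linarith) ?_
          exact le_self_pow₀ (by linarith) (by lia)
      _ ≤ (4 / 3)⁻¹ := by gcongr
      _ = 3 / 4 := by norm_num
  obtain ⟨σ, hσ⟩ := cauchySeq_tendsto_of_complete
    (cauchySeq_of_le_geometric _ _ (hρ.trans_lt (by norm_num)) hstep)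
  refine ⟨σ, hσ, ?_⟩
  have hdist := dist_le_of_le_geometric_of_tendsto₀ _ _ (hρ.trans_lt (by norm_num)) hstep hσ
  rw [mul_zero, pow_zero, pow_zero, zeroCount_of_subsingleton, Nat.cast_one, div_one, dist_comm,
    Real.dist_eq] at hdist
  refine hdist.trans ?_
  rw [mul_assoc 4, mul_comm 4, div_eq_mul_inv]
  gcongr
  exact inv_le_of_inv_le₀ (by norm_num) (by linarith)

end IntegralForms

section HenselCount

variable {R M : Type*} [CommRing R] [AddCommGroup M] [Module R M] {I : Ideal R}
  (Q : QuadraticMap R M R)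

lemma polar_mem_of_mem_smul_top {y : M} (hy : y ∈ (I • ⊤ : Submodule R M)) (x : M) :
    QuadraticMap.polar Q y x ∈ I := by
  refine Submodule.smul_induction_on hy (fun r hr z _ => ?_) fun a b ha hb => ?_
  · rw [QuadraticMap.polar_smul_left]
    exact I.mul_mem_right _ hr
  · rw [QuadraticMap.polar_add_left]
    exact I.add_mem ha hb

lemma map_mem_of_mem_smul_top {y : M} (hy : y ∈ (I • ⊤ : Submodule R M)) : Q y ∈ I := by
  refine Submodule.smul_induction_on' hy (fun r hr z _ => ?_) fun a ha b _ hQa hQb => ?_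
  · rw [QuadraticMap.map_smul, smul_eq_mul]
    exact I.mul_mem_right _ (I.mul_mem_right _ hr)
  · rw [QuadraticMap.map_add Q a b]
    exact I.add_mem (I.add_mem hQa hQb) (polar_mem_of_mem_smul_top Q ha b)

lemma map_add_smul_eq (x e : M) (t : R) :
    Q (x + t • e) = Q x + t * (QuadraticMap.polar Q x e + t * Q e) := by
  rw [QuadraticMap.map_add Q x, QuadraticMap.map_smul, QuadraticMap.polar_smul_right, smul_eq_mul,
    smul_eq_mul]
  ring

lemma add_smul_sub_mem_smul_top {x x₀ e : M} (hx : x - x₀ ∈ (I • ⊤ : Submodule R M)) {t : R}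
    (ht : t ∈ I) : x + t • e - x₀ ∈ (I • ⊤ : Submodule R M) := by
  rw [add_sub_right_comm]
  exact add_mem hx (Submodule.smul_mem_smul ht trivial)

lemma isUnit_add_of_mem_jacobson_bot {u a : R} (hu : IsUnit u)
    (ha : a ∈ (⊥ : Ideal R).jacobson) : IsUnit (u + a) := by
  obtain ⟨u, rfl⟩ := hu
  have h := u.isUnit.mul (Ideal.mem_jacobson_bot.1 ha ↑u⁻¹)
  rwa [mul_add, mul_one, mul_left_comm, Units.mul_inv, mul_one, add_comm] at h

variable {Q} {x₀ e : M}

lemma isUnit_polar_add_mul (hI : I ≤ (⊥ : Ideal R).jacobson)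
    (hu : IsUnit (QuadraticMap.polar Q x₀ e)) {x : M} (hx : x - x₀ ∈ (I • ⊤ : Submodule R M))
    {t : R} (ht : t ∈ I) : IsUnit (QuadraticMap.polar Q x e + t * Q e) := by
  have hpolar : QuadraticMap.polar Q x e =
      QuadraticMap.polar Q x₀ e + QuadraticMap.polar Q (x - x₀) e := by
    rw [← QuadraticMap.polar_add_left, add_sub_cancel]
  rw [hpolar, add_assoc]
  exact isUnit_add_of_mem_jacobson_bot hu
    (hI (I.add_mem (polar_mem_of_mem_smul_top Q hx e) (I.mul_mem_right _ ht)))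

lemma injOn_map_add_smul (hI : I ≤ (⊥ : Ideal R).jacobson)
    (hu : IsUnit (QuadraticMap.polar Q x₀ e)) {x : M} (hx : x - x₀ ∈ (I • ⊤ : Submodule R M)) :
    Set.InjOn (fun t : R => Q (x + t • e)) I := by
  intro s hs t ht hst
  have hmem := add_smul_sub_mem_smul_top hx ht (e := e)
  have hval : Q (x + s • e) = Q (x + t • e + (s - t) • e) := by
    congr 1
    module
  have hzero : (s - t) * (QuadraticMap.polar Q (x + t • e) e + (s - t) * Q e) = 0 := by
    rw [← add_eq_left (a := Q (x + t • e)), ← map_add_smul_eq, ← hval]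
    exact hst
  exact sub_eq_zero.1
    ((isUnit_polar_add_mul hI hu hmem (I.sub_mem hs ht)).mul_left_eq_zero.1 hzero)

lemma exists_mem_map_add_smul_eq_zero [Finite I] (hI : I ≤ (⊥ : Ideal R).jacobson)
    (h₀ : Q x₀ ∈ I) (hu : IsUnit (QuadraticMap.polar Q x₀ e)) {x : M}
    (hx : x - x₀ ∈ (I • ⊤ : Submodule R M)) : ∃ t ∈ I, Q (x + t • e) = 0 := by
  have hQx : Q x ∈ I := by
    rw [← add_sub_cancel x₀ x, QuadraticMap.map_add Q x₀, QuadraticMap.polar_comm]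
    exact I.add_mem (I.add_mem h₀ (map_mem_of_mem_smul_top Q hx))
      (polar_mem_of_mem_smul_top Q hx x₀)
  have hmaps : Set.MapsTo (fun t : R => Q (x + t • e)) I I := fun t ht => by
    simp only [SetLike.mem_coe, map_add_smul_eq]
    exact I.add_mem hQx (I.mul_mem_right _ ht)
  have hbij := ((Set.toFinite (I : Set R)).injOn_iff_bijOn_of_mapsTo hmaps).1
    (injOn_map_add_smul hI hu hx)
  exact hbij.surjOn I.zero_mem

/- Hensel's lemma in one direction `e`: every point of the residue class `x₀ + I • ⊤` is moved along
`e` to exactly one zero by a step in `I`. -/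
lemma card_zeros_sub_mem_mul_card [Finite I] (hI : I ≤ (⊥ : Ideal R).jacobson)
    (h₀ : Q x₀ ∈ I) (hu : IsUnit (QuadraticMap.polar Q x₀ e)) :
    Nat.card {x // Q x = 0 ∧ x - x₀ ∈ (I • ⊤ : Submodule R M)} * Nat.card I =
      Nat.card (I • ⊤ : Submodule R M) := by
  rw [← Nat.card_prod]
  refine Nat.card_congr (Equiv.ofBijective
    (fun z => ⟨z.1 + z.2.1 • e - x₀, add_smul_sub_mem_smul_top z.1.2.2 z.2.2⟩) ⟨?_, ?_⟩)
  · rintro ⟨⟨x, hx, hx'⟩, ⟨s, hs⟩⟩ ⟨⟨y, hy, hy'⟩, ⟨t, ht⟩⟩ h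
    have hxy : y = x + (s - t) • e := by
      have := sub_left_injective (congrArg Subtype.val h)
      simp only at this
      rw [sub_smul, ← add_sub_assoc, this, add_sub_cancel_right]
    have hst : s - t = 0 := injOn_map_add_smul hI hu hx' (I.sub_mem hs ht) I.zero_mem
      (by simp only [← hxy, hy, zero_smul, add_zero, hx])
    simp [hxy, sub_eq_zero.1 hst]
  · rintro ⟨y, hy⟩
    have hy' : x₀ + y - x₀ ∈ (I • ⊤ : Submodule R M) := by rwa [add_sub_cancel_left]
    obtain ⟨t, ht, hQ⟩ := exists_mem_map_add_smul_eq_zero hI h₀ hu hy'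
    refine ⟨⟨⟨x₀ + y + t • e, hQ, add_smul_sub_mem_smul_top hy' ht⟩, ⟨-t, I.neg_mem ht⟩⟩, ?_⟩
    ext
    simp only
    module

end HenselCount

section ResidueClass

lemma mem_smul_top_pi_iff {R ι : Type*} [CommRing R] [Finite ι] {I : Ideal R} {x : ι → R} :
    x ∈ (I • ⊤ : Submodule R (ι → R)) ↔ ∀ j, x j ∈ I := by
  classical
  have := Fintype.ofFinite ι
  refine ⟨fun hx j => ?_, fun hx => ?_⟩
  · refine Submodule.smul_induction_on hx (fun r hr y _ => ?_) fun y z hy hz => I.add_mem hy hz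
    exact I.mul_mem_right _ hr
  · rw [pi_eq_sum_univ' x]
    exact Submodule.sum_mem _ fun j _ => Submodule.smul_mem_smul (hx j) trivial

variable {ι : Type*} [Fintype ι]

lemma card_smul_top_pi {R : Type*} [CommRing R] (I : Ideal R) :
    Nat.card (I • ⊤ : Submodule R (ι → R)) = Nat.card I ^ Fintype.card ι := by
  rw [Nat.card_congr (Equiv.subtypeEquivRight fun _ => mem_smul_top_pi_iff),
    Nat.card_congr Equiv.subtypePiEquivPi, Nat.card_fun, Nat.card_eq_fintype_card (α := ι)]

variable [DecidableEq ι]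

lemma exists_not_dvd_vecMul {p : ℕ} (hp : p.Prime) {B : Matrix ι ι ℤ} (hB : ¬ (p : ℤ) ∣ B.det)
    {x : ι → ℤ} {j : ι} (hx : ¬ (p : ℤ) ∣ x j) : ∃ i, ¬ (p : ℤ) ∣ (x ᵥ* B) i := by
  have := Fact.mk hp
  simp only [← ZMod.intCast_zmod_eq_zero_iff_dvd] at hB hx ⊢
  rw [Int.cast_det] at hB
  by_contra! hcon
  have hker : (fun i => (x i : ZMod p)) ᵥ* B.map (Int.cast : ℤ → ZMod p) = 0 := by
    ext i
    rw [Pi.zero_apply, ← hcon i]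
    exact (RingHom.map_vecMul (Int.castRingHom (ZMod p)) B x i).symm
  exact hx (congrFun (Matrix.eq_zero_of_vecMul_eq_zero hB hker) j)

lemma polar_formOver_intCast_single (A : Matrix ι ι ℤ) (R : Type*) [CommRing R] (x : ι → ℤ)
    (i : ι) : QuadraticMap.polar (formOver A R) (fun j => (x j : R)) (Pi.single i 1) =
      ((x ᵥ* (A + Aᵀ)) i : ℤ) := by
  rw [polar_formOver, dotProduct_mulVec, dotProduct_single_one]
  exact (RingHom.map_vecMul (Int.castRingHom R) (A + Aᵀ) x i).symm

lemma ker_castHom_le_jacobson {p m k : ℕ} (hp : p.Prime) (hm : m ≠ 0) (hmk : m ≤ k) :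
    RingHom.ker (ZMod.castHom (pow_dvd_pow p hmk) (ZMod (p ^ m))) ≤
      (⊥ : Ideal (ZMod (p ^ k))).jacobson := by
  have hk : k ≠ 0 := by lia
  intro a ha
  have := Fact.mk hp
  have ha' : ZMod.castHom (dvd_pow_self p hk) (ZMod p) a = 0 := by
    have hcomp : (ZMod.castHom (dvd_pow_self p hm) (ZMod p)).comp
        (ZMod.castHom (pow_dvd_pow p hmk) (ZMod (p ^ m))) =
          ZMod.castHom (dvd_pow_self p hk) (ZMod p) := Subsingleton.elim _ _
    rw [← hcomp, RingHom.comp_apply, RingHom.mem_ker.1 ha, map_zero]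
  refine Ideal.mem_jacobson_bot.2 fun y => isUnit_of_castHom_prime_ne_zero hp hk ?_
  rw [map_add, map_mul, ha', zero_mul, zero_add, map_one]
  exact one_ne_zero

lemma card_zeros_castHom_eq_mul {p m k : ℕ} (hp : p.Prime) (hm : m ≠ 0) (hmk : m ≤ k)
    (A : Matrix ι ι ℤ) (hA : ¬ (p : ℤ) ∣ (A + Aᵀ).det) {x : ι → ℤ}
    (hx : (p : ℤ) ^ m ∣ formOver A ℤ x) {j : ι} (hj : ¬ (p : ℤ) ∣ x j) :
    Nat.card {v : ι → ZMod (p ^ k) // formOver A (ZMod (p ^ k)) v = 0 ∧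
        ∀ i, v i - x i ∈ RingHom.ker (ZMod.castHom (pow_dvd_pow p hmk) (ZMod (p ^ m)))} *
      p ^ (k - m) = (p ^ (k - m)) ^ Fintype.card ι := by
  have : NeZero (p ^ k) := ⟨pow_ne_zero _ hp.ne_zero⟩
  set I := RingHom.ker (ZMod.castHom (pow_dvd_pow p hmk) (ZMod (p ^ m)))
  have hIcard : Nat.card I = p ^ (k - m) := by
    refine Nat.eq_of_mul_eq_mul_right (pow_pos hp.pos m) ?_
    rw [card_ker_castHom_mul, ← pow_add, Nat.sub_add_cancel hmk]
  have hzero : formOver A (ZMod (p ^ k)) (fun i => (x i : ZMod (p ^ k))) ∈ I := by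
    have hform : formOver A (ZMod (p ^ k)) (fun i => (x i : ZMod (p ^ k))) =
        (formOver A ℤ x : ℤ) := formOver_comp A (Int.castRingHom (ZMod (p ^ k))) x
    rw [hform, RingHom.mem_ker, map_intCast, ZMod.intCast_zmod_eq_zero_iff_dvd]
    exact_mod_cast hx
  obtain ⟨i, hi⟩ := exists_not_dvd_vecMul hp hA hj
  have hunit : IsUnit (QuadraticMap.polar (formOver A (ZMod (p ^ k)))
      (fun i => (x i : ZMod (p ^ k))) (Pi.single i 1)) := by
    refine isUnit_of_castHom_prime_ne_zero hp (by lia) ?_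
    rwa [polar_formOver_intCast_single, map_intCast, Ne, ZMod.intCast_zmod_eq_zero_iff_dvd]
  have h := card_zeros_sub_mem_mul_card (ker_castHom_le_jacobson hp hm hmk) hzero hunit
  rw [card_smul_top_pi, hIcard] at h
  simpa only [mem_smul_top_pi_iff, Pi.sub_apply] using h

end ResidueClass

section LocalDensity

lemma Fint_add_transpose {m : ℕ} (A : Matrix (Fin m) (Fin m) ℤ) (x : Fin m → ℤ) :
    Fint (A + Aᵀ) x = formOver A ℤ x := by
  have hdouble : ∑ i, ∑ j, (A + Aᵀ) i j * x i * x j = 2 * formOver A ℤ x := by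
    have hpolar := polar_formOver A (R := ℤ) x x
    rw [QuadraticMap.polar_self, nsmul_eq_mul, Nat.cast_two] at hpolar
    rw [hpolar]
    simp [dotProduct, mulVec, Finset.mul_sum, mul_comm, mul_left_comm]
  rw [Fint, hdouble, Int.mul_ediv_cancel_left _ two_ne_zero]

lemma exists_eq_add_transpose {ι : Type*} [LinearOrder ι] {N : Matrix ι ι ℤ} (hsym : N.IsSymm)
    (heven : ∀ i, Even (N i i)) : ∃ A : Matrix ι ι ℤ, N = A + Aᵀ := by
  refine ⟨of fun i j => if i < j then N i j else if i = j then N i i / 2 else 0, ?_⟩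
  ext i j
  rcases lt_trichotomy i j with h | rfl | h
  · simp [h, h.not_gt, h.ne']
  · obtain ⟨a, ha⟩ := heven i
    simp only [Matrix.add_apply, transpose_apply, of_apply, lt_irrefl, if_false, if_true]
    lia
  · simp [h, h.not_gt, h.ne', hsym.apply]

lemma bijective_fin_natCast_zmod (q : ℕ) [NeZero q] :
    Function.Bijective fun x : Fin q => ((x : ℕ) : ZMod q) :=
  ⟨fun x y h => Fin.ext <| by
    simpa only [ZMod.val_natCast_of_lt x.2, ZMod.val_natCast_of_lt y.2] using congrArg ZMod.val h,
   fun x => ⟨⟨x.val, ZMod.val_lt x⟩, ZMod.natCast_zmod_val x⟩⟩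

variable {n : ℕ} (A : Matrix (Fin (n + 1)) (Fin (n + 1)) ℤ) (L : ℕ) (lam : Fin (n + 1) → ℤ)

lemma localCount_add_transpose {p k : ℕ} (hp : p.Prime) (hk : padicValNat p L ≤ k) :
    localCount n (A + Aᵀ) L lam p k =
      Nat.card {v : Fin (n + 1) → ZMod (p ^ k) // formOver A (ZMod (p ^ k)) v = 0 ∧
        ∀ i, v i - lam i ∈
          RingHom.ker (ZMod.castHom (pow_dvd_pow p hk) (ZMod (p ^ padicValNat p L)))} := by
  have : NeZero (p ^ k) := ⟨pow_ne_zero _ hp.ne_zero⟩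
  let e := Equiv.ofBijective _ (bijective_fin_natCast_zmod (p ^ k))
  refine Nat.card_congr ((Equiv.piCongrRight fun _ => e).subtypeEquiv fun v => ?_)
  have he : (Equiv.piCongrRight fun _ => e) v =
      Int.castRingHom (ZMod (p ^ k)) ∘ fun i => ((v i : ℕ) : ℤ) := by
    ext i
    simp [e]
  rw [he, formOver_comp, Fint_add_transpose, Int.coe_castRingHom,
    ZMod.intCast_zmod_eq_zero_iff_dvd, Nat.cast_pow]
  refine and_congr_right' (forall_congr' fun i => ?_)
  rw [Function.comp_apply, ← Int.cast_sub, RingHom.mem_ker, map_intCast,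
    ZMod.intCast_zmod_eq_zero_iff_dvd, Nat.cast_pow]

lemma localCount_of_not_dvd {p : ℕ} (hp : p.Prime) (hpL : ¬ p ∣ L) (k : ℕ) :
    localCount n (A + Aᵀ) L lam p k = zeroCount A (ZMod (p ^ k)) := by
  have hm := padicValNat.eq_zero_of_not_dvd hpL
  rw [localCount_add_transpose A L lam hp (hm.trans_le k.zero_le)]
  refine Nat.card_congr (Equiv.subtypeEquivRight fun v => and_iff_left fun i => ?_)
  have : Subsingleton (ZMod (p ^ padicValNat p L)) := by
    rw [hm, pow_zero]
    infer_instance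
  exact Subsingleton.elim _ _

/-- `σ` is the `p`-adic density of the solutions of `F = 0` congruent to `lam` modulo the
`p`-part of `L`: the limit `σ_p(W; L, lam)` of the normalised counts modulo `p ^ k`, for the form
`F` with Hessian `N`. The residue condition is void when `L = 1`, which gives `σ_p(W)`. -/
def HasLocalDensity (n : ℕ) (N : Matrix (Fin (n + 1)) (Fin (n + 1)) ℤ) (L : ℕ)
    (lam : Fin (n + 1) → ℤ) (p : ℕ) (σ : ℝ) : Prop :=
  Tendsto (fun k => (localCount n N L lam p k : ℝ) / (p : ℝ) ^ (n * k)) atTop (𝓝 σ)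

variable {A L lam}

lemma exists_hasLocalDensity (hn : 2 ≤ n) (hA : (A + Aᵀ).det ≠ 0) {p : ℕ} (hp : p.Prime) :
    ∃ σ, HasLocalDensity n (A + Aᵀ) 1 0 p σ ∧
      |σ - 1| ≤ 4 * √((A + Aᵀ).det.natAbs ^ (n + 1) : ℕ) * (√p ^ (n - 1))⁻¹ := by
  simpa only [HasLocalDensity, localCount_of_not_dvd A 1 0 hp hp.not_dvd_one]
    using exists_tendsto_density A hA hn (Fintype.card_fin _) hp

lemma HasLocalDensity.of_not_dvd {p : ℕ} {σ : ℝ} (h : HasLocalDensity n (A + Aᵀ) 1 0 p σ)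
    (hp : p.Prime) (hpL : ¬ p ∣ L) : HasLocalDensity n (A + Aᵀ) L lam p σ := by
  simp only [HasLocalDensity, localCount_of_not_dvd A L lam hp hpL]
  simpa only [HasLocalDensity, localCount_of_not_dvd A 1 0 hp hp.not_dvd_one] using h

lemma hasLocalDensity_of_dvd {p : ℕ} (hp : p.Prime) (hL : L ≠ 0) (hpL : p ∣ L)
    (hA : ¬ (p : ℤ) ∣ (A + Aᵀ).det) (hlam : (L : ℤ) ∣ Fint (A + Aᵀ) lam) {j : Fin (n + 1)}
    (hj : ¬ (p : ℤ) ∣ lam j) :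
    HasLocalDensity n (A + Aᵀ) L lam p ((p : ℝ) ^ (n * padicValNat p L))⁻¹ := by
  have := Fact.mk hp
  set m := padicValNat p L
  have hm : m ≠ 0 := Nat.one_le_iff_ne_zero.1 (one_le_padicValNat_of_dvd hL hpL)
  have hdvd : (p : ℤ) ^ m ∣ formOver A ℤ lam := by
    rw [← Fint_add_transpose]
    exact dvd_trans (by exact_mod_cast pow_padicValNat_dvd) hlam
  refine tendsto_const_nhds.congr' ?_
  filter_upwards [eventually_ge_atTop m] with k hmk
  have hcount : localCount n (A + Aᵀ) L lam p k * p ^ (k - m) = (p ^ (k - m)) ^ (n + 1) := by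
    rw [localCount_add_transpose A L lam hp hmk, card_zeros_castHom_eq_mul hp hm hmk A hA hdvd hj,
      Fintype.card_fin]
  have hp0 : (p : ℝ) ≠ 0 := by exact_mod_cast hp.ne_zero
  rw [pow_succ, Nat.mul_left_inj (pow_ne_zero _ hp.ne_zero)] at hcount
  rw [hcount, eq_div_iff (pow_ne_zero _ hp0), inv_mul_eq_iff_eq_mul₀ (pow_ne_zero _ hp0)]
  push_cast
  rw [← pow_mul, ← pow_add, mul_comm (k - m), ← mul_add, Nat.add_sub_cancel' hmk]

end LocalDensity

section EulerProducts

/-- The Dirichlet coefficient `μ(d) d⁻ᵏ`, restricted to the integers `d` coprime to `L`. -/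
def moebiusCoeff (L k d : ℕ) : ℝ :=
  if d.Coprime L then (ArithmeticFunction.moebius d : ℝ) / (d : ℝ) ^ k else 0

lemma moebiusCoeff_mul_of_coprime (L k : ℕ) {a b : ℕ} (hab : a.Coprime b) :
    moebiusCoeff L k (a * b) = moebiusCoeff L k a * moebiusCoeff L k b := by
  have hμ := ArithmeticFunction.isMultiplicative_moebius.map_mul_of_coprime hab
  simp only [moebiusCoeff, Nat.coprime_mul_iff_left, hμ]
  push_cast
  rw [mul_pow, mul_div_mul_comm, ite_zero_mul_ite_zero]

lemma moebiusCoeff_prime_pow_eq_zero (L k : ℕ) {p e : ℕ} (hp : p.Prime) (he : 2 ≤ e) :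
    moebiusCoeff L k (p ^ e) = 0 := by
  have hμ : ArithmeticFunction.moebius (p ^ e) = 0 := by
    rw [ArithmeticFunction.moebius_apply_prime_pow hp (by lia), if_neg (by lia)]
  simp [moebiusCoeff, hμ]

lemma tsum_moebiusCoeff_prime_pow (L k : ℕ) {p : ℕ} (hp : p.Prime) :
    ∑' e, moebiusCoeff L k (p ^ e) = if p ∣ L then 1 else 1 - ((p : ℝ) ^ k)⁻¹ := by
  rw [tsum_eq_sum (s := range 2) fun e he =>
    moebiusCoeff_prime_pow_eq_zero L k hp (by simpa [Nat.succ_le_iff] using he)]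
  by_cases hpL : p ∣ L <;>
    simp [sum_range_succ, moebiusCoeff, hp.coprime_iff_not_dvd, hpL,
      ArithmeticFunction.moebius_apply_prime hp, neg_div, sub_eq_add_neg]

lemma summable_norm_moebiusCoeff (L : ℕ) {k : ℕ} (hk : 2 ≤ k) :
    Summable fun d => ‖moebiusCoeff L k d‖ := by
  refine .of_nonneg_of_le (fun _ => norm_nonneg _) (fun d => ?_)
    (Real.summable_one_div_nat_pow.2 hk)
  unfold moebiusCoeff
  split_ifs
  · rw [norm_div, norm_pow, Real.norm_natCast, Real.norm_eq_abs]
    gcongr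
    exact_mod_cast ArithmeticFunction.abs_moebius_le_one
  · simp

lemma hasProd_one_sub_inv_prime_pow (L : ℕ) {k : ℕ} (hk : 2 ≤ k) :
    HasProd (fun p : {q : {r : ℕ // r.Prime} // ¬ q.1 ∣ L} => 1 - ((p.1.1 : ℝ) ^ k)⁻¹)
      (∑' d, moebiusCoeff L k d) := by
  let f : {r : ℕ // r.Prime} → ℝ := fun p => if p.1 ∣ L then 1 else 1 - ((p.1 : ℝ) ^ k)⁻¹
  have heuler : HasProd f (∑' d, moebiusCoeff L k d) :=
    (EulerProduct.eulerProduct_hasProd (f := moebiusCoeff L k) (by simp [moebiusCoeff])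
      (moebiusCoeff_mul_of_coprime L k) (summable_norm_moebiusCoeff L hk)
      (by simp [moebiusCoeff])).congr_fun fun p => (tsum_moebiusCoeff_prime_pow L k p.2).symm
  have hsupport : Function.mulSupport f ⊆ {q | ¬ q.1 ∣ L} := fun p hp hpL => hp (if_pos hpL)
  exact ((hasProd_subtype_iff_of_mulSupport_subset hsupport).2 heuler).congr_fun
    fun p => (if_neg p.2).symm

lemma hasProd_ite_dvd {M : Type*} [CommMonoid M] [TopologicalSpace M] [ContinuousMul M] {L : ℕ}
    (hL : L ≠ 0) (f g : ℕ → M) {P : M}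
    (hf : HasProd (fun p : {q : {r : ℕ // r.Prime} // ¬ q.1 ∣ L} => f p.1.1) P) :
    HasProd (fun p : {r : ℕ // r.Prime} => if p.1 ∣ L then g p.1 else f p.1)
      ((∏ p ∈ L.primeFactors, g p) * P) := by
  set s := L.primeFactors.subtype Nat.Prime
  have hmem (p : {r : ℕ // r.Prime}) : p ∈ s ↔ p.1 ∣ L := by
    simp [s, p.2, hL]
  have hprod : ∏ p ∈ s, (if p.1 ∣ L then g p.1 else f p.1) = ∏ p ∈ L.primeFactors, g p := by
    rw [prod_congr rfl fun p hp => if_pos ((hmem p).1 hp),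
      prod_subtype_of_mem g fun p hp => Nat.prime_of_mem_primeFactors hp]
  have hcompl : IsCompl (s : Set {r : ℕ // r.Prime}) {p | ¬ p.1 ∣ L} := by
    have hs : (s : Set {r : ℕ // r.Prime})ᶜ = {p | ¬ p.1 ∣ L} := by
      ext p
      simp [hmem]
    exact hs ▸ isCompl_compl
  rw [← hprod]
  exact (s.hasProd _).mul_isCompl hcompl (hf.congr_fun fun p => if_neg p.2)

lemma summable_norm_sub_one_of_abs_sub_one_le {k : ℕ} (hk : 3 ≤ k) {σ : ℕ → ℝ} {C : ℝ}
    (hσ : ∀ p : ℕ, p.Prime → |σ p - 1| ≤ C * (√p ^ k)⁻¹) :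
    Summable fun p : {r : ℕ // r.Prime} => ‖σ p.1 - 1‖ := by
  have hexp : -((k : ℝ) / 2) < -1 := by
    have : (3 : ℝ) ≤ k := by exact_mod_cast hk
    linarith
  refine .of_nonneg_of_le (fun _ => norm_nonneg _) (fun p => hσ p.1 p.2) (.mul_left C ?_)
  refine (Nat.Primes.summable_rpow.2 hexp).congr fun p => ?_
  rw [Real.sqrt_eq_rpow, ← Real.rpow_mul_natCast (Nat.cast_nonneg _),
    ← Real.rpow_neg (Nat.cast_nonneg _), one_div_mul_eq_div]

lemma summable_abs_snd_mul_const {ι κ : Type*} [Finite ι] {f : κ → ℝ}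
    (hf : Summable fun d => ‖f d‖) (c : ℝ) : Summable fun x : ι × κ => |f x.2 * c| := by
  simp only [abs_mul, mul_comm _ |c|]
  exact Summable.of_finite.mul_of_nonneg hf (fun _ => abs_nonneg c) fun _ => norm_nonneg _

lemma totient_mul_prod_inv_pow {n L : ℕ} (hn : 1 ≤ n) (hL : L ≠ 0) :
    (L.totient : ℝ) * ∏ p ∈ L.primeFactors, ((p : ℝ) ^ (n * padicValNat p L))⁻¹ =
      ∏ p ∈ L.primeFactors, (1 - (p : ℝ)⁻¹) * ((p : ℝ) ^ ((n - 1) * padicValNat p L))⁻¹ := by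
  have htotient : (L.totient : ℝ) = L * ∏ p ∈ L.primeFactors, (1 - (p : ℝ)⁻¹) := by
    simpa using congrArg (Rat.cast : ℚ → ℝ) (Nat.totient_eq_mul_prod_factors L)
  have hfactor : (L : ℝ) = ∏ p ∈ L.primeFactors, (p : ℝ) ^ padicValNat p L := by
    conv_lhs => rw [Nat.prod_primeFactors_pow_factorization hL]
    push_cast
    refine prod_congr rfl fun p hp => ?_
    rw [Nat.factorization_def _ (Nat.prime_of_mem_primeFactors hp)]
  rw [htotient]
  nth_rw 1 [hfactor]
  rw [← prod_mul_distrib, ← prod_mul_distrib]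
  refine prod_congr rfl fun p hp => ?_
  have hp0 : (p : ℝ) ≠ 0 := by exact_mod_cast (Nat.prime_of_mem_primeFactors hp).ne_zero
  obtain ⟨l, rfl⟩ := Nat.exists_eq_add_of_le' hn
  rw [Nat.add_sub_cancel, add_one_mul, pow_add, mul_inv]
  field_simp

end EulerProducts
section SingularSeries

lemma isCoprime_val_unit_mul_inv {L d : ℕ} (γ : (ZMod L)ˣ) (hd : d.Coprime L) :
    IsCoprime (((γ : ZMod L) * (d : ZMod L)⁻¹).val : ℤ) L := by
  have hunit : ((γ * (ZMod.unitOfCoprime d hd)⁻¹ : (ZMod L)ˣ) : ZMod L) =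
      (γ : ZMod L) * (d : ZMod L)⁻¹ := by
    rw [Units.val_mul, ← ZMod.inv_coe_unit, ZMod.coe_unitOfCoprime]
  rw [← hunit, Nat.isCoprime_iff_coprime]
  exact ZMod.val_coe_unit_coprime _

lemma Fint_add_transpose_smul {m : ℕ} (A : Matrix (Fin m) (Fin m) ℤ) (c : ℤ) (x : Fin m → ℤ) :
    Fint (A + Aᵀ) (c • x) = c * c * Fint (A + Aᵀ) x := by
  rw [Fint_add_transpose, Fint_add_transpose, QuadraticMap.map_smul, smul_eq_mul]

lemma exists_mem_not_dvd_of_gcd_eq_one {ι : Type*} {s : Finset ι} {Γ : ι → ℤ} {a : ℤ} {p : ℕ}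
    (hp : p.Prime) (hpa : (p : ℤ) ∣ a) (hΓ : Int.gcd (s.gcd Γ) a = 1) :
    ∃ j ∈ s, ¬ (p : ℤ) ∣ Γ j := by
  by_contra! hdvd
  exact (Nat.prime_iff_prime_int.1 hp).not_isUnit
    ((Int.isCoprime_iff_gcd_eq_one.2 hΓ).isUnit_of_dvd' (Finset.dvd_gcd hdvd) hpa)

variable {n L : ℕ} {A : Matrix (Fin (n + 1)) (Fin (n + 1)) ℤ}

lemma HasLocalDensity.smul {p : ℕ} {σ : ℝ} (hσ : HasLocalDensity n (A + Aᵀ) 1 0 p σ)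
    (hp : p.Prime) (hL : L ≠ 0) (hLdet : Int.gcd L (A + Aᵀ).det = 1) {Γ : Fin (n + 1) → ℤ}
    (hΓ : (L : ℤ) ∣ Fint (A + Aᵀ) Γ) (hΓgcd : Int.gcd (Finset.univ.gcd Γ) L = 1) {c : ℤ}
    (hc : IsCoprime c L) :
    HasLocalDensity n (A + Aᵀ) L (c • Γ) p
      (if p ∣ L then ((p : ℝ) ^ (n * padicValNat p L))⁻¹ else σ) := by
  split_ifs with hpL
  · have hpL' : (p : ℤ) ∣ L := by exact_mod_cast hpL
    have hpi : Prime (p : ℤ) := Nat.prime_iff_prime_int.1 hp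
    have hpdet : ¬ (p : ℤ) ∣ (A + Aᵀ).det := fun h =>
      hpi.not_isUnit ((Int.isCoprime_iff_gcd_eq_one.2 hLdet).isUnit_of_dvd' hpL' h)
    have hpc : ¬ (p : ℤ) ∣ c := fun h => hpi.not_isUnit (hc.isUnit_of_dvd' h hpL')
    obtain ⟨j, -, hj⟩ := exists_mem_not_dvd_of_gcd_eq_one hp hpL' hΓgcd
    refine hasLocalDensity_of_dvd hp hL hpL hpdet ?_ (hpi.not_dvd_mul hpc hj)
    rw [Fint_add_transpose_smul]
    exact hΓ.mul_left _
  · exact hσ.of_not_dvd hp hpL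

lemma exists_hasLocalDensity_summable (hn : 4 ≤ n) (hA : (A + Aᵀ).det ≠ 0) :
    ∃ σ : ℕ → ℝ, (∀ p : ℕ, p.Prime → HasLocalDensity n (A + Aᵀ) 1 0 p (σ p)) ∧
      Summable fun p : {r : ℕ // r.Prime} => ‖σ p.1 - 1‖ := by
  choose! σ hσ hbound using fun (p : ℕ) (hp : p.Prime) =>
    exists_hasLocalDensity (by lia : 2 ≤ n) hA hp
  exact ⟨σ, hσ, summable_norm_sub_one_of_abs_sub_one_le (by lia) hbound⟩

end SingularSeries

theorem moebius_singular_series_identity_general (n : ℕ) (hn : 4 ≤ n)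
    (N : Matrix (Fin (n + 1)) (Fin (n + 1)) ℤ) (hNsym : N.IsSymm)
    (hNeven : ∀ i, Even (N i i)) (hNdet : N.det ≠ 0)
    (L : ℕ) (hL : 0 < L) (hLcop : Int.gcd (L : ℤ) N.det = 1)
    (Γ : Fin (n + 1) → ℤ) (hΓ : (L : ℤ) ∣ Fint N Γ)
    (hΓgcd : Int.gcd (Finset.univ.gcd Γ) (L : ℤ) = 1) :
    ∃ S : (ZMod L)ˣ → ℕ → ℝ,
      (∀ (γ : (ZMod L)ˣ) (d : ℕ), 0 < d → d.Coprime L →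
        ∃ σ : ℕ → ℝ,
          (∀ p : ℕ, p.Prime → HasLocalDensity n N L
            (fun i => (((γ : ZMod L) * (d : ZMod L)⁻¹).val : ℤ) * Γ i) p (σ p)) ∧
          HasProd (fun p : {p : ℕ // p.Prime} => σ p.1) (S γ d)) ∧
      Summable (fun γd : (ZMod L)ˣ × ℕ => |moebiusCoeff L (n - 1) γd.2 * S γd.1 γd.2|) ∧
      ∃ σW : ℕ → ℝ,
        (∀ p : ℕ, p.Prime → HasLocalDensity n N 1 0 p (σW p)) ∧
        ∃ P : ℝ,
          HasProd (fun p : {q : {r : ℕ // r.Prime} // ¬ q.1 ∣ L} =>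
            (1 - ((p.1.1 : ℝ) ^ (n - 1))⁻¹) * σW p.1.1) P ∧
          ∑' γ : (ZMod L)ˣ, ∑' d : ℕ, moebiusCoeff L (n - 1) d * S γ d =
            (∏ p ∈ L.primeFactors,
              (1 - (p : ℝ)⁻¹) * ((p : ℝ) ^ ((n - 1) * padicValNat p L))⁻¹) * P := by
  have : NeZero L := ⟨hL.ne'⟩
  obtain ⟨A, rfl⟩ := exists_eq_add_transpose hNsym hNeven
  obtain ⟨σW, hσW, hsummable⟩ := exists_hasLocalDensity_summable hn hNdet
  obtain ⟨Q, hQ⟩ : Multipliable fun p : {q : {r : ℕ // r.Prime} // ¬ q.1 ∣ L} => σW p.1.1 := by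
    simpa only [add_sub_cancel, Function.comp_apply] using
      multipliable_one_add_of_summable (hsummable.comp_injective Subtype.val_injective)
  let g (p : ℕ) : ℝ := ((p : ℝ) ^ (n * padicValNat p L))⁻¹
  have hk : 2 ≤ n - 1 := by lia
  refine ⟨fun _ _ => (∏ p ∈ L.primeFactors, g p) * Q, fun γ d _ hd =>
    ⟨fun p => if p ∣ L then g p else σW p, fun p hp => (hσW p hp).smul hp hL.ne' hLcop hΓ hΓgcd
      (isCoprime_val_unit_mul_inv γ hd), hasProd_ite_dvd hL.ne' σW g hQ⟩, ?_, σW, hσW,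
    (∑' d, moebiusCoeff L (n - 1) d) * Q, (hasProd_one_sub_inv_prime_pow L hk).mul hQ, ?_⟩
  · exact summable_abs_snd_mul_const (summable_norm_moebiusCoeff L hk) _
  · simp only [tsum_mul_right]
    rw [tsum_const, Nat.card_eq_fintype_card, ZMod.card_units_eq_totient, nsmul_eq_mul,
      ← totient_mul_prod_inv_pow (by lia) hL.ne']
    ring

/-- The arithmetic factor identity: the Möbius-inverted sum of singular series equals
an Euler product of local densities. -/
theorem moebius_singular_series_identity (n : ℕ) (hn : 4 ≤ n)
    (N : Matrix (Fin (n+1)) (Fin (n+1)) ℤ) (hNsym : N.IsSymm)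
    (hNeven : ∀ i, Even (N i i)) (hNdet : N.det ≠ 0)
    (L : ℕ) (hL : 0 < L) (hLcop : Int.gcd (L : ℤ) (2 * N.det) = 1)
    (Γ : Fin (n+1) → ℤ) (hΓ : (L : ℤ) ∣ Fint N Γ)
    (hΓgcd : Int.gcd (Finset.univ.gcd Γ) (L : ℤ) = 1) :
    ∃ Sser : (ZMod L)ˣ → ℕ → ℝ,
      (∀ (γ : (ZMod L)ˣ) (d : ℕ), 0 < d → Nat.Coprime d L →
        ∃ σp : ℕ → ℝ,
          (∀ p : ℕ, p.Prime →
            Filter.Tendsto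
              (fun k : ℕ =>
                (localCount n N L
                  (fun i => ((((γ : ZMod L) * ((d : ZMod L))⁻¹).val : ℤ) * Γ i)) p k : ℝ)
                  / (p : ℝ)^(n*k))
              Filter.atTop (nhds (σp p))) ∧
          HasProd (fun p : {p : ℕ // p.Prime} => σp p.1) (Sser γ d)) ∧
      Summable (fun gd : (ZMod L)ˣ × ℕ =>
        |if Nat.Coprime gd.2 L then
            ((ArithmeticFunction.moebius gd.2 : ℤ) : ℝ) / (gd.2 : ℝ)^(n-1)
              * Sser gd.1 gd.2
          else 0|) ∧
      ∃ σW : ℕ → ℝ,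
        (∀ p : ℕ, p.Prime →
          Filter.Tendsto
            (fun k : ℕ => (localCount n N 1 0 p k : ℝ) / (p : ℝ)^(n*k))
            Filter.atTop (nhds (σW p))) ∧
        ∃ P : ℝ,
          HasProd
            (fun p : {q : {r : ℕ // r.Prime} // ¬ (q.1 ∣ L)} =>
              (1 - ((p.1.1 : ℝ) ^ (n-1))⁻¹) * σW p.1.1) P ∧
          (∑' γ : (ZMod L)ˣ, ∑' d : ℕ,
              (if Nat.Coprime d L then
                ((ArithmeticFunction.moebius d : ℤ) : ℝ) / (d : ℝ)^(n-1) * Sser γ d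
              else 0))
            = (∏ p ∈ L.primeFactors,
                (1 - ((p : ℝ))⁻¹) * (((p : ℝ)) ^ ((n-1) * padicValNat p L))⁻¹) * P := by
  have hLcop' : Int.gcd (L : ℤ) N.det = 1 := Int.isCoprime_iff_gcd_eq_one.1
    (Int.isCoprime_iff_gcd_eq_one.2 hLcop).of_mul_right_right
  simpa only [HasLocalDensity, moebiusCoeff, ite_zero_mul] using
    moebius_singular_series_identity_general n hn N hNsym hNeven hNdet L hL hLcop' Γ hΓ hΓgcd

end Quad
end
end

section
/- (Evaluation of complete quadratic Gauss–Kloosterman sums.) Let G(x) = xᵀM_G x be a quadratic form in n+1 variables, where M_G is symmetric, 2M_G has integer entries and det M_G ≠ 0; set D_G := det(2M_G) ∈ ℤ. For m ∈ ℤ, c ∈ ℤ^{n+1} and q ∈ ℕ define T_q(G,m;c) := Σ_{a mod q, gcd(a,q)=1} Σ_{b ∈ (ℤ/qℤ)^{n+1}} e_q( a·(G(b) − m) + c·b ), and let ι_q := Σ_{x mod q} e_q(x²) be the quadratic Gauss sum. Assume gcd(q, 2D_G) = 1. Then T_q(G,m;c) = ( ι_q·(2|q) )^{n+1} · (D_G|q)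 · Σ_{a mod q, gcd(a,q)=1} (a|q)^{n+1} · e_q( −a·m − w_a·N_G(c) ), where (·|q) denotes the Jacobi symbol, N_G(c) := cᵀ·adj(2M_G)·c ∈ ℤ (adj = adjugate), and w_a denotes the multiplicative inverse of 2·a·D_G modulo q. -/
open scoped BigOperators
open Finset Filter Topology Matrix

noncomputable section

namespace Quad

/-!
Completing the square reduces the sum over `b` to `∑ ψ (xᵀ M x)` with `M = 2a N_G`, so everything
rests on the identity `∑ ψ (xᵀ M x) = (det M | q) ∑ ψ (xᵀ x)` for `q` odd and coprime to `det M`.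
If `q = s² k`, averaging over translations by the vectors killed by `s` shows that a sum modulo `q`
is a multiple, with a factor independent of `M`, of the corresponding sum modulo `k`; since also
`(det M | q) = (det M | k)`, one may assume `q` squarefree. The Chinese remainder theorem then
reduces to `q` prime, where `M` is congruent to a diagonal matrix and a one-variable sum with
coefficient `d` differs from the one with coefficient `1` by the quadratic character of `d`. These
reductions change the additive character, so `ψ` is an arbitrary primitive one throughout.
-/

section QuadraticForm

variable {ι R S : Type*} [Fintype ι] [CommSemiring R]

lemma dotProduct_mulVec_comm {M : Matrix ι ι R} (hM : M.IsSymm) (x y : ι → R) :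
    x ⬝ᵥ M *ᵥ y = y ⬝ᵥ M *ᵥ x := by
  rw [dotProduct_mulVec, ← mulVec_transpose, hM.eq, dotProduct_comm]

lemma quadratic_add {M : Matrix ι ι R} (hM : M.IsSymm) (x y : ι → R) :
    (x + y) ⬝ᵥ M *ᵥ (x + y) = x ⬝ᵥ M *ᵥ x + 2 * (x ⬝ᵥ M *ᵥ y) + y ⬝ᵥ M *ᵥ y := by
  rw [mulVec_add, add_dotProduct, dotProduct_add, dotProduct_add, dotProduct_mulVec_comm hM y x]
  ring

lemma map_quadratic [CommSemiring S] (φ : R →+* S) (M : Matrix ι ι R) (x : ι → R) :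
    φ (x ⬝ᵥ M *ᵥ x) = (φ ∘ x) ⬝ᵥ M.map φ *ᵥ (φ ∘ x) := by
  rw [RingHom.map_dotProduct]
  congr 1
  exact funext (RingHom.map_mulVec φ M x)

end QuadraticForm

section QuadraticGaussSum

variable {ι R S T A : Type*} [Fintype ι] [CommRing R]

lemma sum_comp_addMonoidHom {G H : Type*} [AddGroup G] [Fintype G] [AddGroup H] [Fintype H]
    [Semiring A] (φ : G →+ H) [DecidablePred (· ∈ φ.range)] (f : H → A) :
    ∑ x, f (φ x) = ∑ y, (if y ∈ φ.range then (Nat.card φ.ker : A) else 0) * f y := by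
  classical
  have card_fiber (y : H) :
      (#{x | φ x = y} : A) = if y ∈ φ.range then (Nat.card φ.ker : A) else 0 := by
    split_ifs with hy
    · rw [AddMonoidHom.card_fiber_eq_of_mem_range φ hy ⟨0, map_zero φ⟩, ← Fintype.card_subtype,
        ← Nat.card_eq_fintype_card]
      rfl
    · rw [filter_false_of_mem fun x _ hx => hy ⟨x, hx⟩, card_empty, Nat.cast_zero]
  rw [← sum_fiberwise univ φ]
  refine sum_congr rfl fun y _ => ?_
  rw [← card_fiber, sum_congr rfl fun x hx => by rw [(mem_filter.1 hx).2], sum_const,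
    nsmul_eq_mul]

lemma exists_isPrimitive_apply_eq [CommRing S] [CommMonoid A] {ψ : AddChar R A}
    (hψ : ψ.IsPrimitive) {φ : R →+* S} (hφ : Function.Surjective φ) {c : R}
    (hker : ∀ x, φ x = 0 ↔ c * x = 0) :
    ∃ ψ' : AddChar S A, ψ'.IsPrimitive ∧ ∀ x, ψ' (φ x) = ψ (c * x) := by
  have factors {x y : R} (hxy : φ x = φ y) : ψ (c * x) = ψ (c * y) := by
    rw [sub_eq_zero.1 ((mul_sub c x y).symm.trans ((hker _).1 (by rw [map_sub, hxy, sub_self])))]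
  let s := Function.surjInv hφ
  have hs (y : S) : φ (s y) = y := Function.surjInv_eq hφ y
  let ψ' : AddChar S A :=
    { toFun := fun y => ψ (c * s y)
      map_zero_eq_one' := by
        rw [factors (y := 0) (by rw [hs, map_zero]), mul_zero, AddChar.map_zero_eq_one]
      map_add_eq_mul' := fun y z => by
        rw [factors (y := s y + s z) (by rw [map_add, hs, hs, hs]), mul_add,
          AddChar.map_add_eq_mul] }
  have hψ' (x : R) : ψ' (φ x) = ψ (c * x) := factors (hs _)
  refine ⟨ψ', fun y hy hmul => ?_, hψ'⟩
  obtain ⟨a, rfl⟩ := hφ y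
  refine hψ (a := c * a) (fun hca => hy ((hker a).2 hca)) (DFunLike.ext _ _ fun x => ?_)
  have := DFunLike.congr_fun hmul (φ x)
  rwa [AddChar.mulShift_apply, ← map_mul, hψ', ← mul_assoc] at this

lemma addChar_map_sum_eq_prod {G : Type*} [AddCommMonoid G] [CommMonoid A] (ψ : AddChar G A)
    (f : ι → G) : ψ (∑ i, f i) = ∏ i, ψ (f i) := by
  simpa only [ofAdd_sum] using! map_prod ψ.toMonoidHom (fun i => Multiplicative.ofAdd (f i)) univ

lemma exists_isPrimitive_mul_of_ringEquiv_prod [CommRing S] [CommRing T] [CommMonoid A]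
    (e : R ≃+* S × T) {ψ : AddChar R A} (hψ : ψ.IsPrimitive) :
    ∃ (ψ₁ : AddChar S A) (ψ₂ : AddChar T A), ψ₁.IsPrimitive ∧ ψ₂.IsPrimitive ∧
      ∀ x, ψ x = ψ₁ (e x).1 * ψ₂ (e x).2 := by
  obtain ⟨ψ₁, hψ₁, h₁⟩ := exists_isPrimitive_apply_eq hψ (φ := (RingHom.fst S T).comp e)
    (Prod.fst_surjective.comp e.surjective) (c := e.symm (1, 0)) fun x => by
      simp [← e.map_eq_zero_iff (x := _ * x), Prod.ext_iff]
  obtain ⟨ψ₂, hψ₂, h₂⟩ := exists_isPrimitive_apply_eq hψ (φ := (RingHom.snd S T).comp e)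
    (Prod.snd_surjective.comp e.surjective) (c := e.symm (0, 1)) fun x => by
      simp [← e.map_eq_zero_iff (x := _ * x), Prod.ext_iff]
  refine ⟨ψ₁, ψ₂, hψ₁, hψ₂, fun x => ?_⟩
  have hidem : e.symm (1, 0) + e.symm (0, 1) = 1 := by
    rw [← map_add, Prod.mk_add_mk, add_zero, zero_add, ← Prod.one_eq_mk, map_one]
  calc ψ x = ψ (e.symm (1, 0) * x + e.symm (0, 1) * x) := by rw [← add_mul, hidem, one_mul]
    _ = ψ₁ (e x).1 * ψ₂ (e x).2 := by rw [AddChar.map_add_eq_mul, ← h₁, ← h₂]; rfl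

variable [Fintype R] [CommSemiring A]

/-- The Gauss sum `∑ ψ(xᵀ M x)` of the quadratic form with matrix `M` over a finite ring `R`, the
entries of `x` running through `R` independently; `ψ` is any additive character of `R`. -/
def quadraticGaussSum (ψ : AddChar R A) [DecidableEq ι] (M : Matrix ι ι R) : A :=
  ∑ x : ι → R, ψ (x ⬝ᵥ M *ᵥ x)

variable [DecidableEq ι]

lemma quadraticGaussSum_congruent (ψ : AddChar R A) {P : Matrix ι ι R} (hP : IsUnit P.det)
    (M : Matrix ι ι R) : quadraticGaussSum ψ (Pᵀ * M * P) = quadraticGaussSum ψ M := by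
  have hinj : Function.Injective P.mulVec :=
    mulVec_injective_of_isUnit ((isUnit_iff_isUnit_det P).2 hP)
  refine Fintype.sum_bijective _ (Finite.injective_iff_bijective.1 hinj) _ _ fun x => ?_
  rw [← mulVec_mulVec, ← mulVec_mulVec, dotProduct_mulVec x Pᵀ, vecMul_transpose]

lemma quadraticGaussSum_diagonal (ψ : AddChar R A) (d : ι → R) :
    quadraticGaussSum ψ (diagonal d) = ∏ i, ∑ x, ψ (d i * x ^ 2) := by
  rw [Fintype.prod_sum]
  refine sum_congr rfl fun x _ => ?_
  rw [dotProduct, addChar_map_sum_eq_prod]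
  refine prod_congr rfl fun i _ => ?_
  rw [mulVec_diagonal]
  congr 1
  ring

lemma quadraticGaussSum_one (ψ : AddChar R A) :
    quadraticGaussSum ψ (1 : Matrix ι ι R) = (∑ x, ψ (x ^ 2)) ^ Fintype.card ι := by
  simp only [← diagonal_one, quadraticGaussSum_diagonal, one_mul, prod_const, card_univ]

lemma sum_quadratic_add_linear (ψ : AddChar R A) {M : Matrix ι ι R} (hM : M.IsSymm)
    (v : ι → R) :
    ∑ x, ψ (x ⬝ᵥ M *ᵥ x + 2 * (x ⬝ᵥ M *ᵥ v)) =
      ψ (-(v ⬝ᵥ M *ᵥ v)) * quadraticGaussSum ψ M := by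
  rw [quadraticGaussSum, ← Equiv.sum_comp (Equiv.addRight v) fun x => ψ (x ⬝ᵥ M *ᵥ x), mul_sum]
  refine sum_congr rfl fun x _ => ?_
  rw [Equiv.coe_addRight, quadratic_add hM, ← AddChar.map_add_eq_mul]
  congr 1
  ring

lemma sum_half_quadratic_add_linear (ψ : AddChar R A) {N : Matrix ι ι R} (hN : N.IsSymm)
    (c : ι → R) {a h w : R} (hh : 2 * h = 1) (hw : 2 * a * N.det * w = 1) :
    ∑ x, ψ (a * h * (x ⬝ᵥ N *ᵥ x) + c ⬝ᵥ x) =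
      ψ (-(w * (c ⬝ᵥ N.adjugate *ᵥ c))) * quadraticGaussSum ψ ((2 * a) • N) := by
  set v : ι → R := w • (N.adjugate *ᵥ c) with hv
  have hNv : ((2 * a) • N) *ᵥ v = c := by
    rw [hv, smul_mulVec, mulVec_smul, mulVec_mulVec, mul_adjugate, smul_mulVec, one_mulVec,
      smul_smul, smul_smul, mul_right_comm, hw, one_smul]
  have hvv : v ⬝ᵥ c = w * (c ⬝ᵥ N.adjugate *ᵥ c) := by
    rw [hv, smul_dotProduct, smul_eq_mul, dotProduct_comm]
  rw [← hvv, ← hNv, ← sum_quadratic_add_linear ψ (hN.smul _), hNv]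
  have htwo : IsUnit (2 : R) := .of_mul_eq_one h hh
  refine (Fintype.sum_bijective _ htwo.smul_bijective _ _ fun x => ?_).symm
  congr 1
  simp only [smul_mulVec, mulVec_smul, dotProduct_smul, smul_dotProduct, smul_eq_mul]
  rw [dotProduct_comm c]
  linear_combination (-(2 * a * (x ⬝ᵥ N *ᵥ x))) * hh

lemma quadraticGaussSum_of_ringEquiv_prod [CommRing S] [Fintype S] [CommRing T] [Fintype T]
    (e : R ≃+* S × T) {ψ : AddChar R A} {ψ₁ : AddChar S A} {ψ₂ : AddChar T A}
    (hψ : ∀ x, ψ x = ψ₁ (e x).1 * ψ₂ (e x).2) (M : Matrix ι ι R) :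
    quadraticGaussSum ψ M = quadraticGaussSum ψ₁ (M.map ((RingHom.fst S T).comp e)) *
      quadraticGaussSum ψ₂ (M.map ((RingHom.snd S T).comp e)) := by
  rw [quadraticGaussSum, quadraticGaussSum, quadraticGaussSum, Fintype.sum_mul_sum,
    ← Fintype.sum_prod_type']
  refine Fintype.sum_equiv ((Equiv.piCongrRight fun _ => e.toEquiv).trans
    (Equiv.arrowProdEquivProdArrow ι (fun _ => S) fun _ => T)) _ _ fun x => ?_
  rw [hψ]
  congr 2
  · exact map_quadratic ((RingHom.fst S T).comp (e : R →+* S × T)) M x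
  · exact map_quadratic ((RingHom.snd S T).comp (e : R →+* S × T)) M x

end QuadraticGaussSum

section FiniteField

variable {ι F A : Type*} [Field F] [Fintype F] [DecidableEq F] [CommRing A]

lemma sum_sq_eq_gaussSum [IsDomain A] (hF : ringChar F ≠ 2) {ψ : AddChar F A} (hψ : ψ ≠ 1) :
    ∑ x, ψ (x ^ 2) = gaussSum ((quadraticChar F).ringHomComp (Int.castRingHom A)) ψ := by
  have card_sqrts (y : F) : (#{x | x ^ 2 = y} : A) = quadraticChar F y + 1 := by
    rw [← Int.cast_natCast, ← Int.cast_one, ← Int.cast_add, ← quadraticChar_card_sqrts hF y,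
      Set.toFinset_ofPred]
  calc ∑ x, ψ (x ^ 2) = ∑ y, (#{x : F | x ^ 2 = y} : A) * ψ y := by
        rw [← sum_fiberwise univ (fun x : F => x ^ 2)]
        refine sum_congr rfl fun y _ => ?_
        rw [sum_congr rfl fun x hx => by rw [(mem_filter.1 hx).2], sum_const, nsmul_eq_mul]
    _ = ∑ y, (quadraticChar F y : A) * ψ y := by
        simp only [card_sqrts, add_one_mul, sum_add_distrib, AddChar.sum_eq_zero_of_ne_one hψ,
          add_zero]

lemma sum_mul_sq_eq_quadraticChar_mul [IsDomain A] (hF : ringChar F ≠ 2) {ψ : AddChar F A}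
    (hψ : ψ.IsPrimitive) {d : F} (hd : d ≠ 0) :
    ∑ x, ψ (d * x ^ 2) = (quadraticChar F d : A) * ∑ x, ψ (x ^ 2) := by
  have hψ_one : ψ ≠ 1 := fun h => hψ one_ne_zero (by rw [AddChar.mulShift_one, h])
  have hχ_sq : (quadraticChar F d : A) ^ 2 = 1 := by
    rw [← Int.cast_pow, quadraticChar_sq_one hd, Int.cast_one]
  have hshift := gaussSum_mulShift ((quadraticChar F).ringHomComp (Int.castRingHom A)) ψ
    (Units.mk0 d hd)
  rw [Units.val_mk0, ← sum_sq_eq_gaussSum hF hψ_one, ← sum_sq_eq_gaussSum hF (hψ hd)] at hshift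
  change (quadraticChar F d : A) * ∑ x, ψ (d * x ^ 2) = _ at hshift
  rw [← hshift, ← mul_assoc, ← sq, hχ_sq, one_mul]

variable [Fintype ι] [DecidableEq ι]

lemma exists_transpose_mul_mul_eq_diagonal {K : Type*} [Field K] (h2 : (2 : K) ≠ 0)
    {M : Matrix ι ι K} (hM : M.IsSymm) :
    ∃ (P : Matrix ι ι K) (d : ι → K), IsUnit P.det ∧ Pᵀ * M * P = diagonal d := by
  have : Invertible (2 : K) := invertibleOfNonzero h2
  obtain ⟨v, hv⟩ := LinearMap.BilinForm.exists_orthogonal_basis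
    (B := toBilin' M) ⟨(isSymm_toBilin'_iff_isSymm.2 hM).eq⟩
  let e : Fin (Module.finrank K (ι → K)) ≃ ι :=
    Fintype.equivOfCardEq (by rw [Fintype.card_fin, Module.finrank_fintype_fun_eq_card])
  let b := v.reindex e
  refine ⟨(Pi.basisFun K ι).toMatrix b, fun i => toBilin' M (b i) (b i), ?_, ?_⟩
  · rw [← Module.Basis.det_apply]
    exact (Pi.basisFun K ι).isUnit_det b
  · have hM' : LinearMap.BilinForm.toMatrix (Pi.basisFun K ι) (toBilin' M) = M := by
      rw [LinearMap.BilinForm.toMatrix_basisFun, LinearMap.BilinForm.toMatrix'_toBilin']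
    nth_rw 1 [← hM']
    rw [LinearMap.BilinForm.toMatrix_mul_basis_toMatrix]
    ext i j
    rw [LinearMap.BilinForm.toMatrix_apply]
    rcases eq_or_ne i j with rfl | hij
    · rw [diagonal_apply_eq]
    · rw [diagonal_apply_ne _ hij, Module.Basis.reindex_apply, Module.Basis.reindex_apply]
      exact hv (e.symm.injective.ne hij)

lemma quadraticGaussSum_eq_quadraticChar_mul [IsDomain A] (hF : ringChar F ≠ 2)
    {ψ : AddChar F A} (hψ : ψ.IsPrimitive) {M : Matrix ι ι F} (hM : M.IsSymm)
    (hdet : M.det ≠ 0) :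
    quadraticGaussSum ψ M =
      (quadraticChar F M.det : A) * quadraticGaussSum ψ (1 : Matrix ι ι F) := by
  obtain ⟨P, d, hP, hPM⟩ := exists_transpose_mul_mul_eq_diagonal (Ring.two_ne_zero hF) hM
  have hprod : ∏ i, d i = P.det ^ 2 * M.det := by
    rw [← det_diagonal, ← hPM, det_mul, det_mul, det_transpose]
    ring
  have hprod_ne : ∏ i, d i ≠ 0 := by
    rw [hprod]
    exact mul_ne_zero (pow_ne_zero 2 hP.ne_zero) hdet
  have hχ : quadraticChar F M.det = ∏ i, quadraticChar F (d i) := by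
    rw [← map_prod, hprod, map_mul, quadraticChar_sq_one' hP.ne_zero, one_mul]
  calc quadraticGaussSum ψ M = ∏ i, ∑ x, ψ (d i * x ^ 2) := by
        rw [← quadraticGaussSum_congruent ψ hP, hPM, quadraticGaussSum_diagonal]
    _ = ∏ i, (quadraticChar F (d i) : A) * ∑ x, ψ (x ^ 2) := prod_congr rfl fun i _ =>
        sum_mul_sq_eq_quadraticChar_mul hF hψ (prod_ne_zero_iff.1 hprod_ne i (mem_univ i))
    _ = (quadraticChar F M.det : A) * quadraticGaussSum ψ (1 : Matrix ι ι F) := by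
        rw [prod_mul_distrib, prod_const, card_univ, quadraticGaussSum_one, hχ, Int.cast_prod]

end FiniteField

section SquareFactor

variable {ι R S A : Type*} [Fintype ι] [CommRing R] [CommRing A]

lemma sum_quadratic_smul_eq_card_ker_mul_of_surjective [DecidableEq ι] [Fintype R]
    [CommRing S] [Fintype S] {φ : R →+* S} (hφ : Function.Surjective φ) {c : R}
    {ψ : AddChar R A} {ψ' : AddChar S A} (hψ' : ∀ x, ψ' (φ x) = ψ (c ^ 2 * x)) (M : Matrix ι ι R) :
    ∑ w : ι → R, ψ ((c • w) ⬝ᵥ M *ᵥ (c • w)) =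
      Nat.card (φ.toAddMonoidHom.compLeft ι).ker * quadraticGaussSum ψ' (M.map φ) := by
  classical
  have hsurj : Function.Surjective (φ.toAddMonoidHom.compLeft ι) := hφ.comp_left
  rw [quadraticGaussSum, mul_sum]
  refine Eq.trans ?_ <| (sum_comp_addMonoidHom (φ.toAddMonoidHom.compLeft ι)
    fun y => ψ' (y ⬝ᵥ M.map φ *ᵥ y)).trans <| sum_congr rfl fun y _ => by
      rw [if_pos (AddMonoidHom.mem_range.2 (hsurj y))]
  refine sum_congr rfl fun w _ => ?_
  change _ = ψ' ((φ ∘ w) ⬝ᵥ M.map φ *ᵥ (φ ∘ w))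
  rw [← map_quadratic, hψ', mulVec_smul, smul_dotProduct, dotProduct_smul, smul_smul, ← sq,
    smul_eq_mul]

variable [IsDomain A]

lemma sum_ker_smul_dotProduct {ψ : AddChar R A} (hψ : ψ.IsPrimitive) {c : R}
    (hann : ∀ u, (∀ t, c * t = 0 → u * t = 0) → c ∣ u) (v : ι → R)
    [Fintype (DistribSMul.toAddMonoidHom (ι → R) c).ker]
    [Decidable (v ∈ (DistribSMul.toAddMonoidHom (ι → R) c).range)] :
    ∑ t : (DistribSMul.toAddMonoidHom (ι → R) c).ker, ψ (t ⬝ᵥ v) =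
      if v ∈ (DistribSMul.toAddMonoidHom (ι → R) c).range then
        (Nat.card (DistribSMul.toAddMonoidHom (ι → R) c).ker : A) else 0 := by
  classical
  let K := (DistribSMul.toAddMonoidHom (ι → R) c).ker
  let pairing : K →+ R :=
    { toFun := fun t => t ⬝ᵥ v
      map_zero' := zero_dotProduct v
      map_add' := fun t t' => add_dotProduct _ _ v }
  have trivial_iff : ψ.compAddMonoidHom pairing = 0 ↔
      v ∈ (DistribSMul.toAddMonoidHom (ι → R) c).range := by
    refine ⟨fun htriv => ?_, ?_⟩
    · have hdvd (i : ι) : c ∣ v i := hann _ fun t ht => by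
        by_contra hvt
        refine hψ hvt (DFunLike.ext _ _ fun r => ?_)
        have hmem : Pi.single i (t * r) ∈ K := by
          change c • Pi.single i (t * r) = 0
          rw [← Pi.single_smul, smul_eq_mul, ← mul_assoc, ht, zero_mul, Pi.single_zero]
        have := DFunLike.congr_fun htriv ⟨_, hmem⟩
        change ψ (Pi.single i (t * r) ⬝ᵥ v) = 1 at this
        rwa [single_dotProduct, mul_comm, ← mul_assoc] at this
      choose w hw using hdvd
      exact ⟨w, funext fun i => (hw i).symm⟩
    · rintro ⟨w, rfl⟩
      refine DFunLike.ext _ _ fun t => ?_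
      have ht : c • (t : ι → R) = 0 := t.2
      change ψ ((t : ι → R) ⬝ᵥ c • w) = 1
      rw [dotProduct_smul, ← smul_dotProduct, ht, zero_dotProduct, AddChar.map_zero_eq_one]
  rw [Nat.card_eq_fintype_card]
  exact (AddChar.sum_eq_ite (ψ.compAddMonoidHom pairing)).trans (if_congr trivial_iff rfl rfl)

variable [DecidableEq ι] [Fintype R]

lemma sum_quadratic_smul_eq_card_ker_mul {ψ : AddChar R A} (hψ : ψ.IsPrimitive) {c : R}
    (hsq : ∀ x y, c * x = 0 → c * y = 0 → x * y = 0)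
    (hann : ∀ u, (∀ t, c * t = 0 → u * t = 0) → c ∣ u) (h2 : IsUnit (2 : R))
    {M : Matrix ι ι R} (hM : M.IsSymm) (hdet : IsUnit M.det) :
    ∑ w : ι → R, ψ ((c • w) ⬝ᵥ M *ᵥ (c • w)) =
      Nat.card (DistribSMul.toAddMonoidHom (ι → R) c).ker * quadraticGaussSum ψ M := by
  classical
  let f := DistribSMul.toAddMonoidHom (ι → R) c
  have quadratic_ker (t : f.ker) : (t : ι → R) ⬝ᵥ M *ᵥ t = 0 := by
    have ht (i : ι) : c * (t : ι → R) i = 0 := congr_fun t.2 i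
    simp only [dotProduct, mulVec, mul_sum]
    refine sum_eq_zero fun i _ => sum_eq_zero fun j _ => ?_
    rw [mul_left_comm, hsq _ _ (ht i) (ht j), mul_zero]
  -- Averaging over `t`, the `ψ`-pairing with `t` picks out those `u` with `2 M u` divisible by `c`.
  have translate (t : f.ker) :
      quadraticGaussSum ψ M = ∑ u, ψ (u ⬝ᵥ M *ᵥ u) * ψ (t ⬝ᵥ (2 : R) • M *ᵥ u) := by
    rw [quadraticGaussSum, ← Equiv.sum_comp (Equiv.addRight (t : ι → R))]
    refine sum_congr rfl fun u _ => ?_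
    rw [Equiv.coe_addRight, quadratic_add hM, quadratic_ker, add_zero, AddChar.map_add_eq_mul,
      dotProduct_mulVec_comm hM u t, dotProduct_smul, smul_eq_mul]
  have mem_range_iff (u : ι → R) : (2 : R) • M *ᵥ u ∈ f.range ↔ u ∈ f.range := by
    refine ⟨?_, ?_⟩
    · rintro ⟨w, hw : c • w = _⟩
      refine ⟨M⁻¹ *ᵥ (h2.unit⁻¹.1 • w), ?_⟩
      change c • M⁻¹ *ᵥ (h2.unit⁻¹.1 • w) = u
      rw [← mulVec_smul, smul_comm, hw, smul_smul, h2.val_inv_mul, one_smul, mulVec_mulVec,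
        nonsing_inv_mul _ hdet, one_mulVec]
    · rintro ⟨w, rfl⟩
      refine ⟨(2 : R) • M *ᵥ w, ?_⟩
      change c • (2 : R) • M *ᵥ w = (2 : R) • M *ᵥ (c • w)
      rw [mulVec_smul, smul_comm]
  calc ∑ w, ψ (f w ⬝ᵥ M *ᵥ f w)
      = ∑ u, (if u ∈ f.range then (Nat.card f.ker : A) else 0) * ψ (u ⬝ᵥ M *ᵥ u) :=
        sum_comp_addMonoidHom f fun u => ψ (u ⬝ᵥ M *ᵥ u)
    _ = ∑ u, ∑ t : f.ker, ψ (u ⬝ᵥ M *ᵥ u) * ψ (t ⬝ᵥ (2 : R) • M *ᵥ u) := by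
        refine sum_congr rfl fun u _ => ?_
        rw [← mul_sum, sum_ker_smul_dotProduct hψ hann, mul_comm]
        simp only [← mem_range_iff u]
        rfl
    _ = Nat.card f.ker * quadraticGaussSum ψ M := by
        rw [sum_comm]
        simp only [← translate, sum_const, card_univ, nsmul_eq_mul, Nat.card_eq_fintype_card]

lemma quadraticGaussSum_eq_mul_of_surjective [CharZero A] [CommRing S] [Fintype S]
    {φ : R →+* S} (hφ : Function.Surjective φ) {c : R} {ψ : AddChar R A} {ψ' : AddChar S A}
    (hψ : ψ.IsPrimitive) (hψ' : ∀ x, ψ' (φ x) = ψ (c ^ 2 * x))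
    (hsq : ∀ x y, c * x = 0 → c * y = 0 → x * y = 0)
    (hann : ∀ u, (∀ t, c * t = 0 → u * t = 0) → c ∣ u) (h2 : IsUnit (2 : R))
    {M : Matrix ι ι R} (hM : M.IsSymm) (hdet : IsUnit M.det) {ε : A}
    (hε : quadraticGaussSum ψ' (M.map φ) = ε * quadraticGaussSum ψ' (1 : Matrix ι ι S)) :
    quadraticGaussSum ψ M = ε * quadraticGaussSum ψ (1 : Matrix ι ι R) := by
  -- Neither of the two kernels depends on the matrix `N`, so they cancel against the case `N = 1`.
  have reduce {N : Matrix ι ι R} (hN : N.IsSymm) (hNdet : IsUnit N.det) :=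
    (sum_quadratic_smul_eq_card_ker_mul hψ hsq hann h2 hN hNdet).symm.trans
      (sum_quadratic_smul_eq_card_ker_mul_of_surjective hφ hψ' N)
  have hone := reduce isSymm_one (by rw [det_one]; exact isUnit_one)
  rw [Matrix.map_one _ (map_zero φ) (map_one φ)] at hone
  have hcard : (Nat.card (DistribSMul.toAddMonoidHom (ι → R) c).ker : A) ≠ 0 :=
    Nat.cast_ne_zero.2 Nat.card_pos.ne'
  refine mul_left_cancel₀ hcard ?_
  rw [reduce hM hdet, hε, mul_left_comm, ← hone, mul_left_comm]

end SquareFactor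

section ZMod

variable {ι A : Type*} [Fintype ι] [DecidableEq ι] [CommRing A] [IsDomain A]

lemma isUnit_det_map_intCast {q : ℕ} {M : Matrix ι ι ℤ} (hM : IsCoprime M.det q) :
    IsUnit (M.map (Int.cast : ℤ → ZMod q)).det := by
  rw [← Int.cast_det, ZMod.coe_int_isUnit_iff_isCoprime]
  exact hM.symm

lemma isUnit_two_of_odd {q : ℕ} (hq : Odd q) : IsUnit (2 : ZMod q) := by
  exact_mod_cast (ZMod.isUnit_iff_coprime 2 q).2 (Nat.coprime_two_left.2 hq)

lemma quadraticGaussSum_prime {p : ℕ} [Fact p.Prime] (hp : Odd p) {ψ : AddChar (ZMod p) A}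
    (hψ : ψ.IsPrimitive) {M : Matrix ι ι ℤ} (hM : M.IsSymm) (hdet : IsCoprime M.det p) :
    quadraticGaussSum ψ (M.map Int.cast) =
      jacobiSym M.det p * quadraticGaussSum ψ (1 : Matrix ι ι (ZMod p)) := by
  have hchar : ringChar (ZMod p) ≠ 2 := by
    rw [ZMod.ringChar_zmod_n]
    rintro rfl
    exact absurd hp (by decide)
  rw [quadraticGaussSum_eq_quadraticChar_mul hchar hψ (hM.map _)
    (isUnit_det_map_intCast hdet).ne_zero, ← Int.cast_det, ← jacobiSym.legendreSym.to_jacobiSym]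
  rfl

lemma quadraticGaussSum_squarefree {q : ℕ} [hq₀ : NeZero q] (hsf : Squarefree q) (hq : Odd q)
    {ψ : AddChar (ZMod q) A} (hψ : ψ.IsPrimitive) {M : Matrix ι ι ℤ} (hM : M.IsSymm)
    (hdet : IsCoprime M.det q) :
    quadraticGaussSum ψ (M.map Int.cast) =
      jacobiSym M.det q * quadraticGaussSum ψ (1 : Matrix ι ι (ZMod q)) := by
  revert hq₀
  induction q using induction_on_primes with
  | zero =>
    exact absurd hsf not_squarefree_zero
  | one =>
    intro
    rw [jacobiSym.one_right, Int.cast_one, one_mul]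
    congr 1
    exact Subsingleton.elim _ _
  | prime_mul p k hp ih =>
    intro
    obtain ⟨hpk, -, hk⟩ := Nat.squarefree_mul_iff.1 hsf
    have : Fact p.Prime := ⟨hp⟩
    have : NeZero k := ⟨hk.ne_zero⟩
    rw [Nat.cast_mul, IsCoprime.mul_right_iff] at hdet
    rw [Nat.odd_mul] at hq
    obtain ⟨ψ₁, ψ₂, hψ₁, hψ₂, hψ_mul⟩ :=
      exists_isPrimitive_mul_of_ringEquiv_prod (ZMod.chineseRemainder hpk) hψ
    rw [quadraticGaussSum_of_ringEquiv_prod _ hψ_mul, quadraticGaussSum_of_ringEquiv_prod _ hψ_mul,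
      Matrix.map_map, Matrix.map_map, Matrix.map_one _ (map_zero _) (map_one _),
      Matrix.map_one _ (map_zero _) (map_one _)]
    have hcast {n : ℕ} (f : ZMod (p * k) →+* ZMod n) : f ∘ Int.cast = Int.cast :=
      funext (map_intCast f)
    rw [hcast, hcast, quadraticGaussSum_prime hq.1 hψ₁ hM hdet.1, ih hk hq.2 hψ₂ hdet.2,
      jacobiSym.mul_right, Int.cast_mul]
    ring

lemma natCast_mul_intCast_eq_zero_iff {q a b : ℕ} (ha : a ≠ 0) (hab : a * b = q) (x : ℤ) :
    (a : ZMod q) * x = 0 ↔ (b : ℤ) ∣ x := by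
  rw [← Int.cast_natCast a, ← Int.cast_mul, ZMod.intCast_zmod_eq_zero_iff_dvd, ← hab,
    Nat.cast_mul]
  exact mul_dvd_mul_iff_left (Nat.cast_ne_zero.2 ha)

lemma natCast_dvd_intCast_iff {q a : ℕ} (haq : a ∣ q) (x : ℤ) :
    (a : ZMod q) ∣ x ↔ (a : ℤ) ∣ x := by
  refine ⟨fun ⟨y, hy⟩ => ?_, fun ⟨y, hy⟩ => ⟨y, by rw [hy]; push_cast; rfl⟩⟩
  obtain ⟨y, rfl⟩ := ZMod.intCast_surjective y
  rw [← Int.cast_natCast a, ← Int.cast_mul, ZMod.intCast_eq_intCast_iff_dvd_sub] at hy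
  have := (Int.natCast_dvd_natCast.2 haq).trans hy
  rwa [dvd_sub_right (dvd_mul_right _ _)] at this

variable [CharZero A]

lemma quadraticGaussSum_eq_mul_of_sq_mul {q s k : ℕ} [NeZero q] [NeZero k]
    (hskq : s ^ 2 * k = q) (hq : Odd q) {ψ : AddChar (ZMod q) A} (hψ : ψ.IsPrimitive)
    {M : Matrix ι ι ℤ} (hM : M.IsSymm) (hdet : IsCoprime M.det q) {ε : A}
    (hε : ∀ ψ' : AddChar (ZMod k) A, ψ'.IsPrimitive →
      quadraticGaussSum ψ' (M.map Int.cast) =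
        ε * quadraticGaussSum ψ' (1 : Matrix ι ι (ZMod k))) :
    quadraticGaussSum ψ (M.map Int.cast) =
      ε * quadraticGaussSum ψ (1 : Matrix ι ι (ZMod q)) := by
  have hs_sq : s ^ 2 ≠ 0 := left_ne_zero_of_mul (hskq ▸ NeZero.ne q)
  have hs : s ≠ 0 := ne_zero_pow two_ne_zero hs_sq
  have hs_sk : s * (s * k) = q := by rw [← hskq, sq, mul_assoc]
  have hsk_s : s * k * s = q := by rw [mul_comm, hs_sk]
  have hkq : k ∣ q := ⟨s ^ 2, by rw [← hskq, mul_comm]⟩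
  have hφ : Function.Surjective (ZMod.castHom hkq (ZMod k)) := ZMod.castHom_surjective hkq
  have hker (x : ZMod q) : ZMod.castHom hkq (ZMod k) x = 0 ↔ (s : ZMod q) ^ 2 * x = 0 := by
    obtain ⟨x, rfl⟩ := ZMod.intCast_surjective x
    rw [map_intCast, ZMod.intCast_zmod_eq_zero_iff_dvd, ← Nat.cast_pow,
      natCast_mul_intCast_eq_zero_iff hs_sq hskq]
  obtain ⟨ψ', hψ', hψ'_apply⟩ := exists_isPrimitive_apply_eq hψ hφ hker
  refine quadraticGaussSum_eq_mul_of_surjective hφ hψ hψ'_apply (fun x y hx hy => ?_)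
    (fun u hu => ?_) (isUnit_two_of_odd hq) (hM.map _) (isUnit_det_map_intCast hdet) ?_
  · obtain ⟨x, rfl⟩ := ZMod.intCast_surjective x
    obtain ⟨y, rfl⟩ := ZMod.intCast_surjective y
    rw [natCast_mul_intCast_eq_zero_iff hs hs_sk] at hx hy
    rw [← Int.cast_mul, ZMod.intCast_zmod_eq_zero_iff_dvd, ← hsk_s, Nat.cast_mul]
    exact mul_dvd_mul hx ((Int.natCast_dvd_natCast.2 (dvd_mul_right s k)).trans hy)
  · obtain ⟨u, rfl⟩ := ZMod.intCast_surjective u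
    rw [natCast_dvd_intCast_iff ⟨_, hs_sk.symm⟩,
      ← natCast_mul_intCast_eq_zero_iff (mul_ne_zero hs (NeZero.ne k)) hsk_s, mul_comm]
    refine hu _ ?_
    rw [← Nat.cast_mul, hs_sk, ZMod.natCast_self]
  · rw [Matrix.map_map, show ZMod.castHom hkq (ZMod k) ∘ Int.cast = Int.cast from
      funext (map_intCast _)]
    exact hε ψ' hψ'

lemma quadraticGaussSum_eq_jacobiSym_mul {q : ℕ} [NeZero q] (hq : Odd q)
    {ψ : AddChar (ZMod q) A} (hψ : ψ.IsPrimitive) {M : Matrix ι ι ℤ} (hM : M.IsSymm)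
    (hdet : IsCoprime M.det q) :
    quadraticGaussSum ψ (M.map Int.cast) =
      jacobiSym M.det q * quadraticGaussSum ψ (1 : Matrix ι ι (ZMod q)) := by
  obtain ⟨k, s, hskq, hk⟩ := Nat.sq_mul_squarefree q
  have : NeZero k := ⟨hk.ne_zero⟩
  refine quadraticGaussSum_eq_mul_of_sq_mul hskq hq hψ hM hdet fun ψ' hψ' => ?_
  rw [← hskq, Nat.cast_mul, IsCoprime.mul_right_iff, Nat.cast_pow,
    IsCoprime.pow_right_iff two_pos] at hdet
  rw [quadraticGaussSum_squarefree hk (Nat.odd_mul.1 (hskq ▸ hq)).2 hψ' hM hdet.2, ← hskq,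
    jacobiSym.mul_right' _ (pow_ne_zero 2 ?_) (NeZero.ne k), jacobiSym.pow_right,
    jacobiSym.sq_one (Int.isCoprime_iff_gcd_eq_one.1 hdet.1), one_mul]
  rintro rfl
  exact NeZero.ne q (by rw [← hskq, sq, zero_mul, zero_mul])

end ZMod

section CompleteSums

lemma sum_sum_eq_zero_of_symm_of_diag {ι R : Type*} [Fintype ι] [Semiring R] [CharP R 2]
    {f : ι → ι → R} (hsymm : ∀ i j, f i j = f j i) (hdiag : ∀ i, f i i = 0) :
    ∑ i, ∑ j, f i j = 0 := by
  rw [← Fintype.sum_prod_type' f]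
  refine sum_involution (fun ij _ => ij.swap) (fun ij _ => ?_) (fun ij _ hij hswap => hij ?_)
    (fun _ _ => mem_univ _) fun ij _ => ij.swap_swap
  · rw [Prod.fst_swap, Prod.snd_swap, hsymm ij.2, CharTwo.add_self_eq_zero]
  · rw [show ij.1 = ij.2 from congr_arg Prod.snd hswap, hdiag]

variable {n q : ℕ}

lemma two_mul_Fint {N : Matrix (Fin n) (Fin n) ℤ} (hN : N.IsSymm) (heven : ∀ i, Even (N i i))
    (x : Fin n → ℤ) : 2 * Fint N x = x ⬝ᵥ N *ᵥ x := by
  have two_dvd : (2 : ℤ) ∣ ∑ i, ∑ j, N i j * x i * x j := by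
    rw [← Nat.cast_two, ← ZMod.intCast_zmod_eq_zero_iff_dvd]
    push_cast
    refine sum_sum_eq_zero_of_symm_of_diag (fun i j => ?_) fun i => ?_
    · rw [hN.apply, mul_right_comm]
    · rw [(ZMod.intCast_zmod_eq_zero_iff_dvd _ 2).2 (heven i).two_dvd, zero_mul, zero_mul]
  rw [Fint, Int.mul_ediv_cancel' two_dvd]
  simp only [dotProduct, mulVec, mul_sum]
  exact sum_congr rfl fun i _ => sum_congr rfl fun j _ => by ring

lemma dualF_eq_dotProduct (N : Matrix (Fin n) (Fin n) ℤ) (c : Fin n → ℤ) :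
    dualF N c = c ⬝ᵥ N.adjugate *ᵥ c := by
  simp only [dualF, dotProduct, mulVec, mul_sum]
  exact sum_congr rfl fun i _ => sum_congr rfl fun j _ => by ring

lemma intCast_Fint {R : Type*} [CommRing R] {h : R} (hh : 2 * h = 1)
    {N : Matrix (Fin n) (Fin n) ℤ} (hN : N.IsSymm) (heven : ∀ i, Even (N i i)) (x : Fin n → ℤ) :
    (Fint N x : R) = h * ((Int.cast ∘ x) ⬝ᵥ N.map Int.cast *ᵥ (Int.cast ∘ x)) := by
  have hcast := map_quadratic (Int.castRingHom R) N x
  rw [← two_mul_Fint hN heven, map_mul, map_ofNat] at hcast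
  linear_combination h * hcast - (Fint N x : R) * hh

lemma intCast_dualF {R : Type*} [CommRing R] (N : Matrix (Fin n) (Fin n) ℤ) (c : Fin n → ℤ) :
    (dualF N c : R) =
      (Int.cast ∘ c) ⬝ᵥ (N.map (Int.cast : ℤ → R)).adjugate *ᵥ (Int.cast ∘ c) := by
  rw [dualF_eq_dotProduct]
  exact (map_quadratic (Int.castRingHom R) _ c).trans
    (congr_arg (fun B => (Int.cast ∘ c) ⬝ᵥ B *ᵥ (Int.cast ∘ c))
      (RingHom.map_adjugate (Int.castRingHom R) N))

variable [NeZero q]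

lemma eChar_intCast (t : ℤ) : eChar q (t : ℝ) = ZMod.stdAddChar (t : ZMod q) := by
  rw [ZMod.stdAddChar_coe, eChar, Complex.ofReal_intCast]

lemma bijective_natCast_fin : Function.Bijective fun i : Fin q => ((i : ℕ) : ZMod q) := by
  refine (Fintype.bijective_iff_injective_and_card _).2 ⟨fun i j hij => ?_, ?_⟩
  · rw [ZMod.natCast_eq_natCast_iff', Nat.mod_eq_of_lt i.2, Nat.mod_eq_of_lt j.2] at hij
    exact Fin.ext hij
  · rw [Fintype.card_fin, ZMod.card]

lemma iotaSum_eq_sum_stdAddChar : iotaSum q = ∑ x : ZMod q, ZMod.stdAddChar (x ^ 2) := by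
  rw [iotaSum, sum_range, ← bijective_natCast_fin.sum_comp fun x => ZMod.stdAddChar (x ^ 2)]
  refine sum_congr rfl fun i _ => ?_
  rw [← Nat.cast_pow, ← Nat.cast_pow, ← Int.cast_natCast (R := ℝ), eChar_intCast,
    Int.cast_natCast]

lemma quadraticGaussSum_smul_eq_jacobiSym_mul (hq : Odd q) {N : Matrix (Fin n) (Fin n) ℤ}
    (hN : N.IsSymm) (hdet : IsCoprime N.det q) {a : ℤ} (ha : IsCoprime a q) :
    quadraticGaussSum ZMod.stdAddChar ((2 * a : ZMod q) • N.map (Int.cast : ℤ → ZMod q)) =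
      (iotaSum q * jacobiSym 2 q) ^ n * jacobiSym N.det q * (jacobiSym a q : ℂ) ^ n := by
  have hmap : (2 * a : ZMod q) • N.map (Int.cast : ℤ → ZMod q) = ((2 * a) • N).map Int.cast := by
    ext i j
    simp only [Matrix.smul_apply, Matrix.map_apply, smul_eq_mul]
    push_cast
    rfl
  have htwo : IsCoprime (2 : ℤ) q := by
    exact_mod_cast Nat.isCoprime_iff_coprime.2 (Nat.coprime_two_left.2 hq)
  have hdet_smul : ((2 * a) • N).det = (2 * a) ^ n * N.det := by rw [det_smul, Fintype.card_fin]
  rw [hmap, quadraticGaussSum_eq_jacobiSym_mul hq (ZMod.isPrimitive_stdAddChar q) (hN.smul _) <| by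
      rw [hdet_smul]
      exact (htwo.mul_left ha).pow_left.mul_left hdet,
    hdet_smul, jacobiSym.mul_left, jacobiSym.pow_left, jacobiSym.mul_left, quadraticGaussSum_one,
    Fintype.card_fin, ← iotaSum_eq_sum_stdAddChar]
  push_cast
  ring

lemma sum_eChar_Fint_sub_add_linear (hq : Odd q) {N : Matrix (Fin n) (Fin n) ℤ} (hN : N.IsSymm)
    (heven : ∀ i, Even (N i i)) (hdet : IsCoprime N.det q) (m : ℤ) (c : Fin n → ℤ)
    {a : ℤ} (ha : IsCoprime a q) :
    ∑ b : Fin n → Fin q,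
        eChar q ((a * (Fint N (fun i => ((b i : ℕ) : ℤ)) - m) +
          ∑ i, c i * ((b i : ℕ) : ℤ) : ℤ) : ℝ) =
      eChar q ((-a * m -
          ((((2 * a * N.det : ℤ) : ZMod q)⁻¹).val : ℤ) * dualF N c : ℤ) : ℝ) *
        quadraticGaussSum ZMod.stdAddChar ((2 * a : ZMod q) • N.map (Int.cast : ℤ → ZMod q)) := by
  let ψ : AddChar (ZMod q) ℂ := ZMod.stdAddChar
  let N' : Matrix (Fin n) (Fin n) (ZMod q) := N.map Int.cast
  let c' : Fin n → ZMod q := Int.cast ∘ c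
  set w : ZMod q := ((2 * a * N.det : ℤ) : ZMod q)⁻¹ with hw_def
  obtain ⟨h, hh⟩ := (isUnit_two_of_odd hq).exists_right_inv
  have hunit : IsUnit (2 * (a : ZMod q) * N'.det) :=
    ((isUnit_two_of_odd hq).mul ((ZMod.coe_int_isUnit_iff_isCoprime _ _).2 ha.symm)).mul
      (isUnit_det_map_intCast hdet)
  have hw : 2 * (a : ZMod q) * N'.det * w = 1 := by
    rw [hw_def]
    push_cast
    exact ZMod.mul_inv_of_unit _ hunit
  let x (b : Fin n → Fin q) : Fin n → ZMod q := fun i => ((b i : ℕ) : ZMod q)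
  simp only [eChar_intCast]
  calc _ = ∑ b, ψ (-(a * m)) * ψ (a * h * (x b ⬝ᵥ N' *ᵥ x b) + c' ⬝ᵥ x b) := by
        refine sum_congr rfl fun b _ => ?_
        have hx : (Int.cast ∘ fun i => ((b i : ℕ) : ℤ)) = x b := funext fun i => Int.cast_natCast _
        have hlinear : ∑ i, (c i : ZMod q) * ((b i : ℕ) : ZMod q) = c' ⬝ᵥ x b := rfl
        rw [← AddChar.map_add_eq_mul]
        congr 1
        push_cast [intCast_Fint hh hN heven, hx, hlinear]
        ring
    _ = ψ (-(a * m)) * ∑ y : Fin n → ZMod q, ψ (a * h * (y ⬝ᵥ N' *ᵥ y) + c' ⬝ᵥ y) := by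
        rw [← mul_sum]
        congr 1
        exact bijective_natCast_fin.comp_left.sum_comp
          fun y => ψ (a * h * (y ⬝ᵥ N' *ᵥ y) + c' ⬝ᵥ y)
    _ = ψ (-(a * m) - w * (c' ⬝ᵥ N'.adjugate *ᵥ c')) *
        quadraticGaussSum ψ ((2 * a : ZMod q) • N') := by
        rw [sum_half_quadratic_add_linear ψ (hN.map _) c' hh hw, ← mul_assoc,
          ← AddChar.map_add_eq_mul, sub_eq_add_neg]
    _ = _ := by
        push_cast [intCast_dualF, ZMod.natCast_zmod_val]
        rw [neg_mul]

end CompleteSums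

/-- Lemma 4.3 (evaluation of complete quadratic Gauss–Kloosterman sums):
for `gcd(q, 2·D_G) = 1`,
`T_q(G,m;c) = (ι_q (2|q))^{n+1} (D_G|q) Σ_{(a,q)=1} (a|q)^{n+1} e_q(−am − w_a N_G(c))`,
where `w_a` is the inverse of `2aD_G` mod `q`. -/
theorem Tq_evaluation (n : ℕ)
    (NG : Matrix (Fin (n+1)) (Fin (n+1)) ℤ) (hsym : NG.IsSymm)
    (heven : ∀ i, Even (NG i i)) (hdet : NG.det ≠ 0)
    (m : ℤ) (c : Fin (n+1) → ℤ) (q : ℕ) (hq : 0 < q)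
    (hcop : Int.gcd (q : ℤ) (2 * NG.det) = 1) :
    Tq n NG q m c
      = (iotaSum q * (jacobiSym 2 q : ℂ))^(n+1) * (jacobiSym NG.det q : ℂ)
          * ∑ a ∈ (Finset.range q).filter (fun a => Nat.gcd a q = 1),
              (jacobiSym (a : ℤ) q : ℂ)^(n+1)
                * eChar q
                    (((-(a : ℤ) * m
                      - ((((2 * (a : ℤ) * NG.det : ℤ) : ZMod q)⁻¹).val : ℤ)
                          * dualF NG c : ℤ) : ℝ)) := by
  have : NeZero q := ⟨hq.ne'⟩
  have hcoprime : IsCoprime (q : ℤ) (2 * NG.det) := Int.isCoprime_iff_gcd_eq_one.2 hcop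
  have hdet_q : IsCoprime NG.det q := hcoprime.of_mul_right_right.symm
  have hodd : Odd q := by
    rw [← Nat.coprime_two_right, ← Nat.isCoprime_iff_coprime]
    exact hcoprime.of_mul_right_left
  rw [Tq, mul_sum]
  refine sum_congr rfl fun a ha => ?_
  have ha_q : IsCoprime (a : ℤ) q := Nat.isCoprime_iff_coprime.2 (mem_filter.1 ha).2
  rw [sum_eChar_Fint_sub_add_linear hodd hsym heven hdet_q m c ha_q,
    quadraticGaussSum_smul_eq_jacobiSym_mul hodd hsym hdet_q ha_q]
  ring

end Quad
end
end
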